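/- arXiv:1503.00093 — 3 statements merged into one kernel-verified Lean document; each statement's English description precedes it below -/
import Mathlib

section
/- Let G : ℂ → ℂ be a Schwartz function and let k = k₁ + ik₂ ∈ ℂ with k ≠ 0. Then for every z ∈ ℂ, ∂̄⁻¹[e_{−k} G](z) = (2/(ik₁ − k₂)) ( ∂̄⁻¹[e_{−k} ∂̄G](z) − e_{−k}(z) G(z) ). In particular, |∂̄⁻¹[e_{−k} G](z)| ≤ (2/|k|) ( |∂̄⁻¹[e_{−k} ∂̄G](z)| + |G(z)| ) for every z ∈ ℂ. -/
open MeasureTheory Complex ComplexConjugate Filter Bornology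
open scoped ENNReal Topology SchwartzMap

noncomputable section

/-- `e_k(z) = exp(i(conj k · z + k · conj z)/2)`. -/
def ek (k z : ℂ) : ℂ := Complex.exp (Complex.I * (conj k * z + k * conj z) / 2)

/-- The solid Cauchy transform `∂̄⁻¹[h](z) = (1/π) ∫ h(w)/(z-w) dA(w)`. -/
def dbarInv (h : ℂ → ℂ) (z : ℂ) : ℂ := (Real.pi : ℂ)⁻¹ * ∫ w : ℂ, h w / (z - w)

/-- The solid Cauchy transform `∂_z⁻¹[h](z) = (1/π) ∫ h(w)/(conj z - conj w) dA(w)`. -/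
def dzInv (h : ℂ → ℂ) (z : ℂ) : ℂ := (Real.pi : ℂ)⁻¹ * ∫ w : ℂ, h w / (conj z - conj w)

/-- The operator `S^k_q[F] = ∂̄⁻¹[e_{-k} q ∂_z⁻¹[e_k conj(q) F]]`. -/
def Sk (k : ℂ) (q F : ℂ → ℂ) : ℂ → ℂ :=
  dbarInv fun z => ek (-k) z * q z * dzInv (fun w => ek k w * conj (q w) * F w) z

/-- The Fourier transform on `ℂ ≅ ℝ²`. -/
def FT (f : ℂ → ℂ) (ξ : ℂ) : ℂ :=
  ∫ z : ℂ, Complex.exp (-(2 * Real.pi * Complex.I) * ((z.re * ξ.re + z.im * ξ.im : ℝ) : ℂ)) * f z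

/-- The inverse Fourier transform on `ℂ ≅ ℝ²`. -/
def FTinv (f : ℂ → ℂ) (x : ℂ) : ℂ :=
  ∫ ξ : ℂ, Complex.exp ((2 * Real.pi * Complex.I) * ((x.re * ξ.re + x.im * ξ.im : ℝ) : ℂ)) * f ξ

/-- `D^s`, the Fourier multiplier with symbol `|ξ|^s`. -/
def Ds (s : ℝ) (f : ℂ → ℂ) : ℂ → ℂ :=
  FTinv fun ξ => ((‖ξ‖ ^ s : ℝ) : ℂ) * FT f ξ

/-- The weighted Sobolev norm
`‖q‖_{H^{s,s}} = max {‖q‖₂, ‖D^s q‖₂, ‖|·|^s q‖₂}`, where by Plancherel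
`‖D^s q‖₂ = ‖ |ξ|^s (FT q)(ξ) ‖₂`. -/
def HssNorm (s : ℝ) (q : ℂ → ℂ) : ℝ≥0∞ :=
  max (eLpNorm q 2 volume)
    (max (eLpNorm (fun ξ : ℂ => ((‖ξ‖ ^ s : ℝ) : ℂ) * FT q ξ) 2 volume)
      (eLpNorm (fun z : ℂ => ((‖z‖ ^ s : ℝ) : ℂ) * q z) 2 volume))

/-- The Cauchy–Riemann operator `∂̄ = (∂/∂z₁ + i ∂/∂z₂)/2`. -/
def dbar (G : ℂ → ℂ) (z : ℂ) : ℂ := (fderiv ℝ G z 1 + Complex.I * fderiv ℝ G z Complex.I) / 2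

end

/-- The unit vector `e^{iθ}`, in the form used by `Complex.polarCoord`. -/
noncomputable def unitVec (θ : ℝ) : ℂ := Real.cos θ + Real.sin θ * Complex.I

theorem continuous_unitVec : Continuous unitVec := by
  unfold unitVec; fun_prop

theorem norm_unitVec (θ : ℝ) : ‖unitVec θ‖ = 1 := by
  have h : unitVec θ = Complex.exp (θ * Complex.I) := by
    simp [unitVec, Complex.exp_mul_I]
  rw [h, Complex.norm_exp_ofReal_mul_I]

theorem unitVec_ne_zero (θ : ℝ) : unitVec θ ≠ 0 := by
  rw [← norm_ne_zero_iff, norm_unitVec]; exact one_ne_zero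

theorem hasDerivAt_unitVec (θ : ℝ) : HasDerivAt unitVec (Complex.I * unitVec θ) θ := by
  have h := (Real.hasDerivAt_cos θ).ofReal_comp.add
    ((Real.hasDerivAt_sin θ).ofReal_comp.mul_const Complex.I)
  refine h.congr_deriv ?_
  simp only [unitVec, Complex.ofReal_neg]
  linear_combination -(Real.sin θ : ℂ) * Complex.I_mul_I

theorem SchwartzMap.exists_norm_add_le {V : Type*} [NormedAddCommGroup V] [NormedSpace ℝ V]
    (f : 𝓢(ℂ, V)) (z : ℂ) : ∃ C, ∀ u, ‖f (z + u)‖ ≤ C * (1 + ‖u‖ ^ 2)⁻¹ := by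
  obtain ⟨C₀, -, h₀⟩ := f.decay 0 0
  obtain ⟨C₂, -, h₂⟩ := f.decay 2 0
  refine ⟨(1 + 2 * ‖z‖ ^ 2) * C₀ + 2 * C₂, fun u => ?_⟩
  have h₀ := h₀ (z + u)
  have h₂ := h₂ (z + u)
  simp only [pow_zero, one_mul, norm_iteratedFDeriv_zero] at h₀ h₂
  rw [← div_eq_mul_inv, le_div_iff₀ (by positivity)]
  have hu : ‖u‖ ≤ ‖z + u‖ + ‖z‖ := by simpa using norm_sub_le (z + u) z
  have hu2 : ‖u‖ ^ 2 ≤ 2 * ‖z + u‖ ^ 2 + 2 * ‖z‖ ^ 2 := by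
    nlinarith [norm_nonneg u, sq_nonneg (‖z + u‖ - ‖z‖)]
  have := mul_le_mul_of_nonneg_left hu2 (norm_nonneg (f (z + u)))
  have := mul_le_mul_of_nonneg_right h₀ (by positivity : 0 ≤ 1 + 2 * ‖z‖ ^ 2)
  nlinarith

theorem integrableOn_polarCoord_target {f : ℝ × ℝ → ℂ} (hf : Continuous f) {C : ℝ}
    (hC : ∀ p, ‖f p‖ ≤ C * (1 + p.1 ^ 2)⁻¹) : IntegrableOn f polarCoord.target := by
  have h1 : Integrable (fun p : ℝ × ℝ => C * (1 + p.1 ^ 2)⁻¹ * 1)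
      ((volume.restrict (Set.Ioi (0 : ℝ))).prod (volume.restrict (Set.Ioo (-Real.pi) Real.pi))) :=
    Integrable.mul_prod (f := fun r : ℝ => C * (1 + r ^ 2)⁻¹) (g := fun _ : ℝ => (1 : ℝ))
      ((integrable_inv_one_add_sq.const_mul C).integrableOn) (integrable_const _)
  rw [IntegrableOn, polarCoord_target, Measure.volume_eq_prod, ← Measure.prod_restrict]
  exact h1.mono' hf.aestronglyMeasurable (ae_of_all _ fun p => by simpa using hC p)

theorem integrableOn_comp_polar_div {h : ℂ → ℂ} (hh : Continuous h) {z : ℂ} {C : ℝ}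
    (hC : ∀ u, ‖h (z + u)‖ ≤ C * (1 + ‖u‖ ^ 2)⁻¹) :
    IntegrableOn (fun p : ℝ × ℝ => h (z + p.1 * unitVec p.2) / unitVec p.2)
      polarCoord.target := by
  have := continuous_unitVec
  refine integrableOn_polarCoord_target (C := C)
    (Continuous.div (by fun_prop) (by fun_prop) fun _ => unitVec_ne_zero _) fun p => ?_
  simpa [norm_unitVec] using hC (p.1 * unitVec p.2)

theorem dbarInv_eq_polar (h : ℂ → ℂ) (z : ℂ) :
    dbarInv h z = -(Real.pi : ℂ)⁻¹ *
      ∫ p in polarCoord.target, h (z + p.1 * unitVec p.2) / unitVec p.2 := by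
  have hs : MeasurableSet polarCoord.target := polarCoord.open_target.measurableSet
  rw [dbarInv, ← integral_add_left_eq_self _ z, ← Complex.integral_comp_polarCoord_symm,
    neg_mul, ← mul_neg, ← integral_neg]
  congr 1
  refine setIntegral_congr_fun hs fun p hp => ?_
  have hp1 : (p.1 : ℂ) ≠ 0 := by
    exact_mod_cast (show (0 : ℝ) < p.1 from hp.1).ne'
  have hE := unitVec_ne_zero p.2
  simp only [Complex.polarCoord_symm_apply, Complex.real_smul]
  rw [← unitVec, show z - (z + p.1 * unitVec p.2) = -(p.1 * unitVec p.2) by ring]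
  field_simp

/-- The radial part of the integral in the Cauchy–Pompeiu formula. -/
theorem integral_polar_radial {F : ℂ → ℂ} {F' : ℂ → ℂ →L[ℝ] ℂ} {z : ℂ} {C C' : ℝ}
    (hF : ∀ w, HasFDerivAt F (F' w) w) (hF' : Continuous F')
    (hC : ∀ u, ‖F (z + u)‖ ≤ C * (1 + ‖u‖ ^ 2)⁻¹)
    (hC' : ∀ u, ‖F' (z + u)‖ ≤ C' * (1 + ‖u‖ ^ 2)⁻¹) :
    IntegrableOn (fun p : ℝ × ℝ => F' (z + p.1 * unitVec p.2) (unitVec p.2)) polarCoord.target ∧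
    ∫ p in polarCoord.target, F' (z + p.1 * unitVec p.2) (unitVec p.2) =
      -(2 * Real.pi * F z) := by
  have hE := continuous_unitVec
  have hb : ∀ p : ℝ × ℝ, ‖F' (z + p.1 * unitVec p.2) (unitVec p.2)‖ ≤ C' * (1 + p.1 ^ 2)⁻¹ :=
    fun p => (ContinuousLinearMap.le_opNorm _ _).trans <| by
      simpa [norm_unitVec] using hC' (p.1 * unitVec p.2)
  have hint := integrableOn_polarCoord_target
    (f := fun p : ℝ × ℝ => F' (z + p.1 * unitVec p.2) (unitVec p.2)) (by fun_prop) hb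
  refine ⟨hint, ?_⟩
  have hradial : ∀ θ : ℝ,
      ∫ r in Set.Ioi (0 : ℝ), F' (z + r * unitVec θ) (unitVec θ) = -F z := fun θ => by
    have hlim : Tendsto (fun r : ℝ => F (z + r * unitVec θ)) atTop (𝓝 0) := by
      refine squeeze_zero_norm (a := fun r : ℝ => C * (1 + r ^ 2)⁻¹)
        (fun r => by simpa [norm_unitVec] using hC (r * unitVec θ)) ?_
      rw [← mul_zero C]
      exact (tendsto_inv_atTop_zero.comp
        (tendsto_atTop_add_const_left _ _ (tendsto_pow_atTop two_ne_zero))).const_mul C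
    have hderiv : ∀ r ∈ Set.Ici (0 : ℝ), HasDerivAt (fun r : ℝ => F (z + r * unitVec θ))
        (F' (z + r * unitVec θ) (unitVec θ)) r := fun r _ => by
      have h1 : HasDerivAt (fun r : ℝ => z + r * unitVec θ) (unitVec θ) r := by
        simpa using ((hasDerivAt_id r).ofReal_comp.mul_const (unitVec θ)).const_add z
      exact (hF _).comp_hasDerivAt r h1
    have hi : IntegrableOn (fun r : ℝ => F' (z + r * unitVec θ) (unitVec θ)) (Set.Ioi 0) :=
      ((integrable_inv_one_add_sq.const_mul C').mono' (by fun_prop)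
        (ae_of_all _ fun r => hb (r, θ))).integrableOn
    simpa using integral_Ioi_of_hasDerivAt_of_tendsto' hderiv hi hlim
  rw [IntegrableOn, polarCoord_target, Measure.volume_eq_prod, ← Measure.prod_restrict] at hint
  rw [polarCoord_target, Measure.volume_eq_prod, ← Measure.prod_restrict,
    integral_prod_symm _ hint]
  simp only [hradial]
  have : (0 : ℝ) ≤ Real.pi + Real.pi := by positivity
  rw [setIntegral_const, Real.volume_real_Ioo, sub_neg_eq_add, max_eq_left this,
    Complex.real_smul]
  push_cast
  ring

/-- The angular part of the integral in the Cauchy–Pompeiu formula. -/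
theorem integral_polar_angular {F : ℂ → ℂ} {F' : ℂ → ℂ →L[ℝ] ℂ} {z : ℂ} {C' : ℝ}
    (hF : ∀ w, HasFDerivAt F (F' w) w) (hF' : Continuous F')
    (hC' : ∀ u, ‖F' (z + u)‖ ≤ C' * (1 + ‖u‖ ^ 2)⁻¹) :
    IntegrableOn (fun p : ℝ × ℝ => F' (z + p.1 * unitVec p.2) (Complex.I * unitVec p.2))
      polarCoord.target ∧
    ∫ p in polarCoord.target, F' (z + p.1 * unitVec p.2) (Complex.I * unitVec p.2) = 0 := by
  have hE := continuous_unitVec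
  have hb : ∀ p : ℝ × ℝ,
      ‖F' (z + p.1 * unitVec p.2) (Complex.I * unitVec p.2)‖ ≤ C' * (1 + p.1 ^ 2)⁻¹ :=
    fun p => (ContinuousLinearMap.le_opNorm _ _).trans <| by
      simpa [norm_unitVec] using hC' (p.1 * unitVec p.2)
  have hint := integrableOn_polarCoord_target
    (f := fun p : ℝ × ℝ => F' (z + p.1 * unitVec p.2) (Complex.I * unitVec p.2))
    (by fun_prop) hb
  refine ⟨hint, ?_⟩
  have hangular : ∀ r ∈ Set.Ioi (0 : ℝ), ∫ θ in Set.Ioo (-Real.pi) Real.pi,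
      F' (z + r * unitVec θ) (Complex.I * unitVec θ) = 0 := fun r hr => by
    have hderiv : ∀ θ ∈ Set.uIcc (-Real.pi) Real.pi,
        HasDerivAt (fun θ : ℝ => F (z + r * unitVec θ))
          (F' (z + r * unitVec θ) (r * (Complex.I * unitVec θ))) θ := fun θ _ =>
      (hF _).comp_hasDerivAt θ (((hasDerivAt_unitVec θ).const_mul (r : ℂ)).const_add z)
    have h := intervalIntegral.integral_eq_sub_of_hasDerivAt hderiv
      (Continuous.intervalIntegrable (by fun_prop) _ _)
    have hper : unitVec Real.pi = unitVec (-Real.pi) := by simp [unitVec]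
    rw [hper, sub_self, intervalIntegral.integral_of_le (by linarith [Real.pi_pos]),
      integral_Ioc_eq_integral_Ioo] at h
    simp only [← Complex.real_smul, map_smul, integral_smul] at h
    simpa only [Complex.real_smul] using
      (smul_eq_zero.1 h).resolve_left (show (0 : ℝ) < r from hr).ne'
  rw [IntegrableOn, polarCoord_target, Measure.volume_eq_prod, ← Measure.prod_restrict] at hint
  rw [polarCoord_target, Measure.volume_eq_prod, ← Measure.prod_restrict, integral_prod _ hint]
  exact setIntegral_eq_zero_of_forall_eq_zero hangular

/-- The **Cauchy–Pompeiu formula** on the whole plane: `∂̄⁻¹ ∂̄ F = F` for decaying `F`. -/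
theorem dbarInv_dbar {F : ℂ → ℂ} {F' : ℂ → ℂ →L[ℝ] ℂ} {z : ℂ} {C C' : ℝ}
    (hF : ∀ w, HasFDerivAt F (F' w) w) (hF' : Continuous F')
    (hC : ∀ u, ‖F (z + u)‖ ≤ C * (1 + ‖u‖ ^ 2)⁻¹)
    (hC' : ∀ u, ‖F' (z + u)‖ ≤ C' * (1 + ‖u‖ ^ 2)⁻¹) :
    dbarInv (dbar F) z = F z := by
  obtain ⟨hri, hr⟩ := integral_polar_radial hF hF' hC hC'
  obtain ⟨hai, ha⟩ := integral_polar_angular hF hF' hC'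
  have hsplit : ∀ p : ℝ × ℝ, dbar F (z + p.1 * unitVec p.2) / unitVec p.2 =
      2⁻¹ * (F' (z + p.1 * unitVec p.2) (unitVec p.2) +
        Complex.I * F' (z + p.1 * unitVec p.2) (Complex.I * unitVec p.2)) := fun p => by
    rw [dbar, (hF _).fderiv]
    set A := F' (z + p.1 * unitVec p.2)
    have h1 : A (unitVec p.2) = Real.cos p.2 * A 1 + Real.sin p.2 * A Complex.I := by
      rw [← Complex.real_smul, ← Complex.real_smul, ← map_smul, ← map_smul, ← map_add]
      simp [unitVec]
    have h2 : A (Complex.I * unitVec p.2) =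
        Real.cos p.2 * A Complex.I - Real.sin p.2 * A 1 := by
      rw [← Complex.real_smul, ← Complex.real_smul, ← map_smul, ← map_smul, ← map_sub]
      congr 1
      simp only [unitVec, Complex.real_smul]
      linear_combination (Real.sin p.2 : ℂ) * Complex.I_mul_I
    have hcs : (Real.cos p.2 : ℂ) ^ 2 + (Real.sin p.2 : ℂ) ^ 2 = 1 := by
      exact_mod_cast Real.cos_sq_add_sin_sq p.2
    rw [div_eq_iff (unitVec_ne_zero _), h1, h2, unitVec]
    set c : ℂ := (Real.cos p.2 : ℂ)
    set s : ℂ := (Real.sin p.2 : ℂ)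
    linear_combination -(2⁻¹ * (A 1 + Complex.I * A Complex.I)) * hcs +
      2⁻¹ * (s ^ 2 * A 1 - c * s * A Complex.I) * Complex.I_mul_I
  rw [dbarInv_eq_polar]
  simp only [hsplit]
  rw [integral_const_mul, integral_add hri (hai.const_mul _), integral_const_mul, hr, ha]
  have : (Real.pi : ℂ) ≠ 0 := by exact_mod_cast Real.pi_ne_zero
  field_simp
  ring

theorem norm_ek (k z : ℂ) : ‖ek k z‖ = 1 := by
  have h : conj k * z + k * conj z = ((2 * (conj k * z).re : ℝ) : ℂ) := by
    rw [← Complex.add_conj]; simp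
  rw [ek, h, mul_div_assoc, mul_comm, ← Complex.ofReal_ofNat, ← Complex.ofReal_div,
    Complex.norm_exp_ofReal_mul_I]

theorem hasFDerivAt_ek (k z : ℂ) :
    HasFDerivAt (ek k) (ek k z • ((Complex.I / 2) •
      (conj k • ContinuousLinearMap.id ℝ ℂ + k • (Complex.conjCLE : ℂ →L[ℝ] ℂ)))) z := by
  have h1 : HasFDerivAt (fun w : ℂ => (Complex.I / 2) * (conj k * w + k * conj w))
      ((Complex.I / 2) • (conj k • ContinuousLinearMap.id ℝ ℂ +
        k • (Complex.conjCLE : ℂ →L[ℝ] ℂ))) z :=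
    (((hasFDerivAt_id z).const_mul _).add
      ((Complex.conjCLE : ℂ →L[ℝ] ℂ).hasFDerivAt.const_mul k)).const_mul _
  have h2 : ek k = fun w => Complex.exp ((Complex.I / 2) * (conj k * w + k * conj w)) := by
    funext w; rw [ek]; ring_nf
  rw [h2]
  exact h1.cexp

theorem dbar_ek_mul {G : ℂ → ℂ} (hG : Differentiable ℝ G) (k w : ℂ) :
    dbar (fun w => ek (-k) w * G w) w =
      ek (-k) w * dbar G w - (Complex.I * k / 2) * (ek (-k) w * G w) := by
  rw [dbar, ((hasFDerivAt_ek (-k) w).fun_mul (hG w).hasFDerivAt).fderiv, dbar]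
  simp
  linear_combination (ek (-k) w * G w * Complex.I * (k - conj k) / 4) * Complex.I_mul_I

theorem dbarInv_ek_mul (G : 𝓢(ℂ, ℂ)) (k z : ℂ) :
    dbarInv (fun w => ek (-k) w * dbar G w) z -
      (Complex.I * k / 2) * dbarInv (fun w => ek (-k) w * G w) z = ek (-k) z * G z := by
  set L : ℂ →L[ℝ] ℂ := (Complex.I / 2) • (conj (-k) • ContinuousLinearMap.id ℝ ℂ +
    (-k) • (Complex.conjCLE : ℂ →L[ℝ] ℂ))
  have hek : Continuous (ek (-k)) := by unfold ek; fun_prop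
  have hGd : Differentiable ℝ G := G.differentiable
  have hG' : Continuous (fderiv ℝ G) := (SchwartzMap.fderivCLM ℝ ℂ ℂ G).continuous
  have hGc := G.continuous
  obtain ⟨C, hC⟩ := G.exists_norm_add_le z
  obtain ⟨C', hC'⟩ := (SchwartzMap.fderivCLM ℝ ℂ ℂ G).exists_norm_add_le z
  have hC' : ∀ u, ‖fderiv ℝ G (z + u)‖ ≤ C' * (1 + ‖u‖ ^ 2)⁻¹ := hC'
  have hF (w : ℂ) : HasFDerivAt (fun w => ek (-k) w * G w)
      (ek (-k) w • fderiv ℝ G w + G w • (ek (-k) w • L)) w :=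
    (hasFDerivAt_ek (-k) w).mul (hGd w).hasFDerivAt
  have hFC (u : ℂ) : ‖ek (-k) (z + u) * G (z + u)‖ ≤ C * (1 + ‖u‖ ^ 2)⁻¹ := by
    simpa [norm_ek] using hC u
  have hpompeiu := dbarInv_dbar (C := C) (C' := C' + C * ‖L‖) hF (by fun_prop) hFC fun u => by
    refine (norm_add_le _ _).trans ?_
    simp only [norm_smul, norm_ek, one_mul]
    linarith [hC' u, mul_le_mul_of_nonneg_right (hC u) (norm_nonneg L)]
  have hdb (u : ℂ) : ‖ek (-k) (z + u) * dbar G (z + u)‖ ≤ C' * (1 + ‖u‖ ^ 2)⁻¹ := by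
    rw [norm_mul, norm_ek, one_mul, dbar, norm_div, Complex.norm_ofNat,
      div_le_iff₀ two_pos]
    refine (norm_add_le _ _).trans ?_
    have h1 := (fderiv ℝ G (z + u)).le_opNorm 1
    have h2 := (fderiv ℝ G (z + u)).le_opNorm Complex.I
    simp only [norm_one, mul_one, Complex.norm_I] at h1 h2
    rw [norm_mul, Complex.norm_I, one_mul]
    linarith [hC' u]
  have hi₁ := integrableOn_comp_polar_div
    (h := fun w => ek (-k) w * dbar G w) (by unfold dbar; fun_prop) hdb
  have hi₂ := integrableOn_comp_polar_div (h := fun w => ek (-k) w * G w) (by fun_prop) hFC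
  rw [← hpompeiu, funext (dbar_ek_mul hGd k)]
  simp only [dbarInv_eq_polar, sub_div, mul_div_assoc (Complex.I * k / 2)]
  rw [integral_sub hi₁ (hi₂.const_mul _), integral_const_mul]
  ring

/-- The pointwise identity behind \eqref{per}:
`∂̄⁻¹[e_{-k}G](z) = (2/(ik₁-k₂))(∂̄⁻¹[e_{-k}∂̄G](z) - e_{-k}(z)G(z))` and the resulting
pointwise bound. -/
theorem stmt5 (G : 𝓢(ℂ, ℂ)) (k : ℂ) (hk : k ≠ 0) :
    (∀ z : ℂ, dbarInv (fun w => ek (-k) w * G w) z =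
      2 / (Complex.I * (k.re : ℂ) - (k.im : ℂ)) *
        (dbarInv (fun w => ek (-k) w * dbar (⇑G) w) z - ek (-k) z * G z)) ∧
    ∀ z : ℂ, ‖dbarInv (fun w => ek (-k) w * G w) z‖ ≤
      2 / ‖k‖ * (‖dbarInv (fun w => ek (-k) w * dbar (⇑G) w) z‖ + ‖G z‖) := by
  have hk' : Complex.I * (k.re : ℂ) - (k.im : ℂ) = Complex.I * k := by
    conv_rhs => rw [← Complex.re_add_im k]
    linear_combination -(k.im : ℂ) * Complex.I_mul_I
  have hid (z : ℂ) : dbarInv (fun w => ek (-k) w * G w) z =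
      2 / (Complex.I * (k.re : ℂ) - (k.im : ℂ)) *
        (dbarInv (fun w => ek (-k) w * dbar (⇑G) w) z - ek (-k) z * G z) := by
    rw [hk', ← dbarInv_ek_mul G k z]
    field_simp [Complex.I_ne_zero]
    ring
  refine ⟨hid, fun z => ?_⟩
  rw [hid, hk', norm_mul, norm_div, norm_mul, Complex.norm_I, one_mul, Complex.norm_ofNat]
  gcongr
  simpa [norm_ek] using
    norm_sub_le (dbarInv (fun w => ek (-k) w * dbar (⇑G) w) z) (ek (-k) z * G z)
end

section
/- Let q : ℂ → ℂ be a Schwartz function and let k ∈ ℂ. If F : ℂ → ℂ is a bounded continuous function satisfying F = S^k_q[F] pointwise, then F is identically zero; that is, the operator I − S^k_q is injective on bounded continuous functions. -/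
open MeasureTheory Complex ComplexConjugate Filter Bornology
open scoped ENNReal Topology SchwartzMap

/-- Measurable functions in `L¹ ∩ L^∞`. -/
structure BoundedIntegrable (f : ℂ → ℂ) : Prop where
  measurable : Measurable f
  integrable : Integrable f
  bounded : ∃ M, ∀ z, ‖f z‖ ≤ M

theorem integrableOn_ball_norm_inv :
    IntegrableOn (fun w : ℂ => ‖w‖⁻¹) (Metric.ball 0 1) := by
  refine integrableOn_ball_of_norm_le_rpow (C := 1) (α := 1) (by simp)
    (by simp) (Eventually.of_forall fun w => ?_) (by fun_prop)
  simp [Real.rpow_neg_one]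

namespace BoundedIntegrable

variable {f g : ℂ → ℂ}

theorem mul_bounded (hf : BoundedIntegrable f) (hg : Measurable g) (hb : ∃ M, ∀ z, ‖g z‖ ≤ M) :
    BoundedIntegrable fun z => f z * g z := by
  obtain ⟨M, hM⟩ := hf.bounded
  obtain ⟨N, hN⟩ := hb
  refine ⟨hf.measurable.mul hg, ?_, M * N, fun z => ?_⟩
  · exact hf.integrable.mul_bdd hg.aestronglyMeasurable (Eventually.of_forall hN)
  · rw [norm_mul]
    exact mul_le_mul (hM z) (hN z) (norm_nonneg _) ((norm_nonneg _).trans (hM z))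

/-- The Cauchy kernel is integrable against `f`, uniformly in the pole. -/
theorem exists_integral_norm_div_le (hf : BoundedIntegrable f) :
    ∃ K, ∀ z, Integrable (fun w => f w / (z - w)) ∧ ∫ w, ‖f w / (z - w)‖ ≤ K := by
  obtain ⟨M, hM⟩ := hf.bounded
  set κ : ℂ → ℝ := (Metric.ball (0 : ℂ) 1).indicator fun w => ‖w‖⁻¹ with hκ
  have hκi : Integrable κ :=
    (integrable_indicator_iff Metric.isOpen_ball.measurableSet).2 integrableOn_ball_norm_inv
  have hdom : ∀ z, Integrable fun w => M * κ (z - w) + ‖f w‖ := fun z =>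
    ((hκi.comp_sub_left z).const_mul M).add hf.integrable.norm
  have hle : ∀ z w, ‖f w / (z - w)‖ ≤ M * κ (z - w) + ‖f w‖ := by
    intro z w
    rw [norm_div, div_eq_mul_inv]
    by_cases h : z - w ∈ Metric.ball (0 : ℂ) 1
    · rw [hκ, Set.indicator_of_mem h]
      have := mul_le_mul_of_nonneg_right (hM w) (inv_nonneg.2 (norm_nonneg (z - w)))
      linarith [norm_nonneg (f w)]
    · rw [hκ, Set.indicator_of_notMem h, mul_zero, zero_add]
      refine mul_le_of_le_one_right (norm_nonneg _) (inv_le_one_of_one_le₀ ?_)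
      simpa using h
  have hint : ∀ z, Integrable fun w => f w / (z - w) := fun z =>
    (hdom z).mono' (hf.measurable.div (measurable_const.sub measurable_id)).aestronglyMeasurable
      (Eventually.of_forall (hle z))
  refine ⟨M * (∫ w, κ w) + ∫ w, ‖f w‖, fun z => ⟨hint z, ?_⟩⟩
  calc ∫ w, ‖f w / (z - w)‖ ≤ ∫ w, (M * κ (z - w) + ‖f w‖) :=
        integral_mono (hint z).norm (hdom z) (hle z)
    _ = _ := by
        rw [integral_add ((hκi.comp_sub_left z).const_mul M) hf.integrable.norm,
          integral_const_mul, integral_sub_left_eq_self κ volume z]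

theorem integrable_div (hf : BoundedIntegrable f) (z : ℂ) :
    Integrable fun w => f w / (z - w) :=
  (hf.exists_integral_norm_div_le.choose_spec z).1

theorem measurable_dbarInv (hf : BoundedIntegrable f) : Measurable (dbarInv f) := by
  have h : Measurable fun p : ℂ × ℂ => f p.2 / (p.1 - p.2) :=
    (hf.measurable.comp measurable_snd).div (measurable_fst.sub measurable_snd)
  exact (h.stronglyMeasurable.integral_prod_right (ν := volume)).measurable.const_mul _

theorem bounded_dbarInv (hf : BoundedIntegrable f) : ∃ M, ∀ z, ‖dbarInv f z‖ ≤ M := by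
  obtain ⟨K, hK⟩ := hf.exists_integral_norm_div_le
  refine ⟨‖(Real.pi : ℂ)⁻¹‖ * K, fun z => ?_⟩
  rw [dbarInv, norm_mul]
  gcongr
  exact (norm_integral_le_integral_norm _).trans (hK z).2

theorem integrable_div_mul_div (hf : BoundedIntegrable f) (hg : BoundedIntegrable g) (z : ℂ) :
    Integrable (fun p : ℂ × ℂ => f p.1 / (z - p.1) * (g p.2 / (p.1 - p.2)))
      (volume.prod volume) := by
  have hm : Measurable fun p : ℂ × ℂ => f p.1 / (z - p.1) * (g p.2 / (p.1 - p.2)) :=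
    ((hf.measurable.comp measurable_fst).div (measurable_const.sub measurable_fst)).mul
      ((hg.measurable.comp measurable_snd).div (measurable_fst.sub measurable_snd))
  obtain ⟨K, hK⟩ := hg.exists_integral_norm_div_le
  refine (integrable_prod_iff hm.aestronglyMeasurable).2
    ⟨Eventually.of_forall fun w => (hg.integrable_div w).const_mul (f w / (z - w)), ?_⟩
  refine ((hf.integrable_div z).norm.mul_const K).mono'
    hm.norm.aestronglyMeasurable.integral_prod_right' (Eventually.of_forall fun w => ?_)
  rw [Real.norm_of_nonneg (integral_nonneg fun _ => norm_nonneg _)]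
  simp only [norm_mul (f w / (z - w))]
  rw [integral_const_mul]
  gcongr
  exact (hK w).2

/-- The product rule for the solid Cauchy transform. -/
theorem dbarInv_mul_dbarInv (hf : BoundedIntegrable f) (hg : BoundedIntegrable g) (z : ℂ) :
    dbarInv f z * dbarInv g z =
      dbarInv (fun w => f w * dbarInv g w) z + dbarInv (fun w => g w * dbarInv f w) z := by
  have key : (∫ w, f w / (z - w)) * ∫ v, g v / (z - v) =
      (∫ w, f w / (z - w) * ∫ v, g v / (w - v)) +
        ∫ v, g v / (z - v) * ∫ w, f w / (v - w) := by
    have h₁ := hf.integrable_div_mul_div hg z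
    have h₂ : Integrable (fun p : ℂ × ℂ => g p.2 / (z - p.2) * (f p.1 / (p.2 - p.1)))
        (volume.prod volume) := (hg.integrable_div_mul_div hf z).swap
    have e₁ : ∫ w, f w / (z - w) * ∫ v, g v / (w - v) =
        ∫ p : ℂ × ℂ, f p.1 / (z - p.1) * (g p.2 / (p.1 - p.2)) ∂(volume.prod volume) := by
      rw [integral_prod _ h₁]
      simp only [integral_const_mul]
    have e₂ : ∫ v, g v / (z - v) * ∫ w, f w / (v - w) =
        ∫ p : ℂ × ℂ, g p.2 / (z - p.2) * (f p.1 / (p.2 - p.1)) ∂(volume.prod volume) := by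
      rw [integral_prod_symm _ h₂]
      simp only [integral_const_mul]
    rw [e₁, e₂, ← integral_add h₁ h₂, ← integral_prod_mul]
    refine integral_congr_ae ?_
    have n₁ : ∀ᵐ p : ℂ × ℂ ∂(volume.prod volume), p.1 ≠ z :=
      Measure.quasiMeasurePreserving_fst.ae (Measure.ae_ne volume z)
    have n₂ : ∀ᵐ p : ℂ × ℂ ∂(volume.prod volume), p.2 ≠ z :=
      Measure.quasiMeasurePreserving_snd.ae (Measure.ae_ne volume z)
    have n₃ : ∀ᵐ p : ℂ × ℂ ∂(volume.prod volume), p.2 ≠ p.1 := by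
      refine (Measure.ae_prod_iff_ae_ae ?_).2
        (Eventually.of_forall fun w => Measure.ae_ne volume w)
      exact (measurableSet_eq_fun measurable_snd measurable_fst).compl
    filter_upwards [n₁, n₂, n₃] with p h₁ h₂ h₃
    have a₁ : z - p.1 ≠ 0 := sub_ne_zero.2 h₁.symm
    have a₂ : z - p.2 ≠ 0 := sub_ne_zero.2 h₂.symm
    have a₃ : p.1 - p.2 ≠ 0 := sub_ne_zero.2 h₃.symm
    rw [← neg_sub p.1 p.2]
    field_simp
    ring
  have assoc : ∀ a b : ℂ → ℂ, dbarInv (fun w => a w * dbarInv b w) z =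
      (Real.pi : ℂ)⁻¹ * ((Real.pi : ℂ)⁻¹ * ∫ w, a w / (z - w) * ∫ v, b v / (w - v)) := by
    intro a b
    simp only [dbarInv]
    congr 1
    rw [← integral_const_mul]
    congr 1
    ext w
    ring
  rw [assoc, assoc, dbarInv, dbarInv]
  linear_combination ((Real.pi : ℂ)⁻¹) ^ 2 * key

end BoundedIntegrable

theorem dbarInv_const_mul (c : ℂ) (f : ℂ → ℂ) (z : ℂ) :
    dbarInv (fun w => c * f w) z = c * dbarInv f z := by
  simp only [dbarInv, mul_div_assoc]
  rw [integral_const_mul]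
  ring

theorem dbarInv_add {f g : ℂ → ℂ} (hf : BoundedIntegrable f) (hg : BoundedIntegrable g) (z : ℂ) :
    dbarInv (fun w => f w + g w) z = dbarInv f z + dbarInv g z := by
  simp only [dbarInv, add_div]
  rw [integral_add (hf.integrable_div z) (hg.integrable_div z)]
  ring

theorem conj_dzInv (f : ℂ → ℂ) (z : ℂ) :
    conj (dzInv f z) = dbarInv (fun w => conj (f w)) z := by
  simp only [dzInv, dbarInv, map_mul, map_inv₀, conj_ofReal]
  rw [← integral_conj]
  simp

section Pow

variable {b : ℂ → ℂ}

theorem bounded_pow {g : ℂ → ℂ} (hg : ∃ M, ∀ z, ‖g z‖ ≤ M) (n : ℕ) :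
    ∃ M, ∀ z, ‖g z ^ n‖ ≤ M := by
  obtain ⟨M, hM⟩ := hg
  exact ⟨M ^ n, fun z => by rw [norm_pow]; gcongr; exact hM z⟩

theorem BoundedIntegrable.mul_dbarInv_pow (hb : BoundedIntegrable b) (n : ℕ) :
    BoundedIntegrable fun z => b z * dbarInv b z ^ n :=
  hb.mul_bounded (hb.measurable_dbarInv.pow_const n) (bounded_pow hb.bounded_dbarInv n)

/-- `∂̄ (w^(n+1)) = (n+1) w^n ∂̄ w` in integrated form. -/
theorem BoundedIntegrable.dbarInv_pow_succ (hb : BoundedIntegrable b) (n : ℕ) (z : ℂ) :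
    dbarInv b z ^ (n + 1) = (n + 1) * dbarInv (fun w => b w * dbarInv b w ^ n) z := by
  induction n generalizing z with
  | zero => simp
  | succ n ih =>
    have h := (hb.mul_dbarInv_pow n).dbarInv_mul_dbarInv hb z
    have h₁ : (fun w => b w * dbarInv b w ^ n * dbarInv b w) =
        fun w => b w * dbarInv b w ^ (n + 1) := by
      ext w; ring
    have h₂ : dbarInv (fun w => b w * dbarInv b w ^ (n + 1)) z = (n + 1) *
        dbarInv (fun w => b w * dbarInv (fun v => b v * dbarInv b v ^ n) w) z := by
      rw [← dbarInv_const_mul]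
      congr 1
      ext w
      rw [ih w]; ring
    rw [h₁] at h
    rw [pow_succ, ih z, mul_assoc, h, mul_add, ← h₂]
    push_cast
    ring

end Pow

/-- A bounded solution of `u = ∂̄⁻¹[b u]` with `b ∈ L¹ ∩ L^∞` vanishes. -/
theorem eq_zero_of_eq_dbarInv_mul {b u : ℂ → ℂ} (hb : BoundedIntegrable b) (hu : Measurable u)
    (hub : ∃ M, ∀ z, ‖u z‖ ≤ M) (h : ∀ z, u z = dbarInv (fun w => b w * u w) z) (z : ℂ) :
    u z = 0 := by
  set φ := dbarInv b with hφ
  have hbu : BoundedIntegrable fun w => b w * u w := hb.mul_bounded hu hub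
  have hu' : dbarInv (fun w => b w * u w) = u := funext fun z => (h z).symm
  set a : ℕ → ℂ := fun n => dbarInv (fun w => b w * u w * φ w ^ n) z with ha
  have hrec : ∀ n : ℕ, a (n + 1) = u z * φ z ^ (n + 1) - (n + 1) * a n := by
    intro n
    have hp := hbu.dbarInv_mul_dbarInv (hb.mul_dbarInv_pow n) z
    rw [hu'] at hp
    have e₁ : a (n + 1) = (n + 1) * dbarInv
        (fun w => b w * u w * dbarInv (fun v => b v * dbarInv b v ^ n) w) z := by
      rw [← dbarInv_const_mul]
      simp only [ha]
      congr 1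
      ext w
      rw [hφ, hb.dbarInv_pow_succ n w]; ring
    have e₂ : a n = dbarInv (fun w => b w * dbarInv b w ^ n * u w) z := by
      simp only [ha]
      congr 1
      ext w
      ring
    rw [e₁, e₂, hφ, hb.dbarInv_pow_succ n z]
    linear_combination (-(n + 1 : ℂ)) * hp
  have hsum : ∀ n : ℕ, (-1) ^ n * (a n / n.factorial) =
      u z * ∑ j ∈ Finset.range (n + 1), (-φ z) ^ j / j.factorial := by
    intro n
    induction n with
    | zero => simp [ha, hu']
    | succ n ih =>
      have hn : (n.factorial : ℂ) ≠ 0 := by exact_mod_cast n.factorial_ne_zero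
      have hn' : (n + 1 : ℂ) ≠ 0 := by exact_mod_cast n.succ_ne_zero
      rw [Finset.sum_range_succ, mul_add, ← ih, hrec n, Nat.factorial_succ, neg_pow (φ z)]
      push_cast
      field_simp
      ring
  have hlim : Tendsto (fun n => (-1) ^ n * (a n / n.factorial)) atTop (𝓝 0) := by
    obtain ⟨W, hW⟩ := hb.bounded_dbarInv
    set K := ‖(Real.pi : ℂ)⁻¹‖ * ∫ w, ‖b w * u w / (z - w)‖ with hK
    have hbd : ∀ n, ‖(-1) ^ n * (a n / n.factorial)‖ ≤ K * (W ^ n / n.factorial) := by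
      intro n
      have ha_le : ‖a n‖ ≤ K * W ^ n := by
        simp only [ha, dbarInv, norm_mul, hK, mul_assoc ‖(Real.pi : ℂ)⁻¹‖]
        gcongr
        rw [← integral_mul_const]
        refine norm_integral_le_of_norm_le ((hbu.integrable_div z).norm.mul_const _)
          (Eventually.of_forall fun w => ?_)
        rw [mul_div_right_comm, norm_mul, norm_pow]
        gcongr
        exact hW w
      rw [norm_mul, norm_pow, norm_neg, norm_one, one_pow, one_mul, norm_div, norm_natCast,
        ← mul_div_assoc]
      gcongr
    refine squeeze_zero_norm hbd ?_
    simpa using (FloorSemiring.tendsto_pow_div_factorial_atTop W).const_mul K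
  have hexp : Tendsto (fun n => (-1) ^ n * (a n / n.factorial)) atTop
      (𝓝 (u z * Complex.exp (-φ z))) := by
    simp only [hsum]
    refine Tendsto.const_mul _ ?_
    have := NormedSpace.expSeries_div_hasSum_exp (-φ z)
    rw [← Complex.exp_eq_exp_ℂ] at this
    exact this.tendsto_sum_nat.comp (tendsto_add_atTop_nat 1)
  have := tendsto_nhds_unique hexp hlim
  simpa [Complex.exp_ne_zero] using this

/-- A bounded solution of `u = ∂̄⁻¹[a conj(u)]` with `a ∈ L¹ ∩ L^∞` vanishes. -/
theorem eq_zero_of_eq_dbarInv_mul_conj {a u : ℂ → ℂ} (ha : BoundedIntegrable a)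
    (hu : Measurable u) (hub : ∃ M, ∀ z, ‖u z‖ ≤ M)
    (h : ∀ z, u z = dbarInv (fun w => a w * conj (u w)) z) (z : ℂ) : u z = 0 := by
  have hc : Measurable fun w => conj (u w) := Complex.continuous_conj.measurable.comp hu
  have hb : BoundedIntegrable fun w => a w * (conj (u w) / u w) := by
    refine ha.mul_bounded (hc.div hu) ⟨1, fun w => ?_⟩
    simpa using div_self_le_one ‖u w‖
  refine eq_zero_of_eq_dbarInv_mul hb hu hub (fun z => ?_) z
  rw [h z]
  congr 1
  ext w
  by_cases hw : u w = 0
  · simp [hw]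
  · field_simp

theorem conj_ek (k z : ℂ) : conj (ek k z) = ek (-k) z := by
  simp only [ek, ← Complex.exp_conj]
  congr 1
  simp only [map_div₀, map_mul, map_add, conj_I, conj_conj, map_neg, map_ofNat]
  ring

theorem measurable_ek (k : ℂ) : Measurable (ek k) := by
  have : Continuous (ek k) := by
    unfold ek
    fun_prop
  exact this.measurable

/-- Injectivity of `I - S^k_q` on bounded continuous functions. -/
theorem stmt12 (q : 𝓢(ℂ, ℂ)) (k : ℂ) (F : ℂ → ℂ) (hFc : Continuous F)
    (hFb : IsBounded (Set.range F)) (hfix : ∀ z : ℂ, F z = Sk k (⇑q) F z) :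
    F = 0 := by
  have hFb' : ∃ M, ∀ z, ‖F z‖ ≤ M := by
    obtain ⟨M, hM⟩ := hFb.exists_norm_le
    exact ⟨M, fun z => hM _ (Set.mem_range_self z)⟩
  have hq : BoundedIntegrable q :=
    ⟨q.continuous.measurable, q.integrable, SchwartzMap.seminorm ℝ 0 0 q,
      fun z => SchwartzMap.norm_le_seminorm ℝ q z⟩
  set a : ℂ → ℂ := fun z => q z * ek (-k) z with ha'
  have ha : BoundedIntegrable a :=
    hq.mul_bounded (measurable_ek _) ⟨1, fun z => (norm_ek _ _).le⟩
  have hFconj : Measurable fun z => conj (F z) :=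
    (Complex.continuous_conj.comp hFc).measurable
  have haF : BoundedIntegrable fun z => a z * conj (F z) :=
    ha.mul_bounded hFconj (by simpa using hFb')
  set H : ℂ → ℂ := dbarInv fun z => a z * conj (F z) with hH
  have hHm : Measurable H := haF.measurable_dbarInv
  have hHb : ∃ M, ∀ z, ‖H z‖ ≤ M := haF.bounded_dbarInv
  have haH : BoundedIntegrable fun z => a z * conj (H z) :=
    ha.mul_bounded (Complex.continuous_conj.measurable.comp hHm) (by simpa using hHb)
  have hF : ∀ z, F z = dbarInv (fun z => a z * conj (H z)) z := by
    intro z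
    rw [hfix z, Sk]
    congr 1
    ext w
    have : H w = conj (dzInv (fun w => ek k w * conj (q w) * F w) w) := by
      rw [conj_dzInv, hH]
      congr 1
      ext v
      simp only [ha', map_mul, conj_ek, conj_conj]
      ring
    rw [this, conj_conj, ha']
    ring
  have sol : ∀ c : ℂ, c * c = 1 → conj c = c → ∀ z, F z + c * H z = 0 := by
    intro c hc hc'
    obtain ⟨M, hM⟩ := hFb'
    obtain ⟨N, hN⟩ := hHb
    have hca : BoundedIntegrable fun z => c * a z := by
      simpa only [mul_comm c] using ha.mul_bounded (g := fun _ => c) measurable_const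
        ⟨‖c‖, fun _ => le_rfl⟩
    have hcaF : BoundedIntegrable fun z => c * (a z * conj (F z)) := by
      simpa only [mul_comm c] using haF.mul_bounded (g := fun _ => c) measurable_const
        ⟨‖c‖, fun _ => le_rfl⟩
    refine eq_zero_of_eq_dbarInv_mul_conj hca (hFc.measurable.add (hHm.const_mul c))
      ⟨M + ‖c‖ * N, fun z => ?_⟩ fun z => ?_
    · refine (norm_add_le _ _).trans (add_le_add (hM z) ?_)
      rw [norm_mul]
      gcongr
      exact hN z
    · conv_lhs => rw [hF z, hH, ← dbarInv_const_mul, ← dbarInv_add haH hcaF]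
      congr 1
      ext w
      rw [map_add, map_mul, hc']
      linear_combination (-(a w * conj (H w))) * hc
  ext z
  have h₁ := sol 1 (by simp) (by simp) z
  have h₂ := sol (-1) (by simp) (by simp) z
  simp only [Pi.zero_apply]
  linear_combination (h₁ + h₂) / 2
end

section
/- Let q : ℂ → ℂ be a Schwartz function and for each k ∈ ℂ let (u₁(·,k), u₂(·,k)) be the bounded continuous scattering solutions, i.e. u₁(·,k) = 1 + ∂̄⁻¹[e_{−k} q conj(u₂(·,k))] and u₂(·,k) = ∂̄⁻¹[e_{−k} q conj(u₁(·,k))]. Then there exist constants C and K (depending on q) such that sup_{z∈ℂ} |u₁(z,k) − 1| ≤ C/|k| for all |k| ≥ K; moreover, for each fixed z ∈ ℂ, u₂(z,k) → 0 as |k| → ∞. -/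
open MeasureTheory Complex ComplexConjugate Filter Bornology
open scoped ENNReal Topology SchwartzMap

/-- `(u₁, u₂)` is a (bounded continuous) solution of the integral equations
`u₁ = 1 + ∂̄⁻¹[e_{-k} q conj u₂]`, `u₂ = ∂̄⁻¹[e_{-k} q conj u₁]`. -/
def IsScattering (q : ℂ → ℂ) (k : ℂ) (u₁ u₂ : ℂ → ℂ) : Prop :=
  Continuous u₁ ∧ IsBounded (Set.range u₁) ∧ Continuous u₂ ∧ IsBounded (Set.range u₂) ∧
  (∀ z : ℂ, u₁ z = 1 + dbarInv (fun w => ek (-k) w * q w * conj (u₂ w)) z) ∧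
  (∀ z : ℂ, u₂ z = dbarInv (fun w => ek (-k) w * q w * conj (u₁ w)) z)


/-- The weight `(1 + ‖x‖)⁻³`, integrable in dimension at most two. -/
noncomputable def decayWeight {E : Type*} [Norm E] (x : E) : ℝ := ((1 + ‖x‖) ^ 3)⁻¹

section DecayWeight

variable {E : Type*} [NormedAddCommGroup E]

theorem decayWeight_nonneg (x : E) : 0 ≤ decayWeight x := by
  unfold decayWeight; positivity

theorem decayWeight_le_one (x : E) : decayWeight x ≤ 1 := by
  unfold decayWeight
  exact inv_le_one_of_one_le₀ (one_le_pow₀ (by linarith [norm_nonneg x]))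

theorem decayWeight_add_le (z x : E) :
    decayWeight (z + x) ≤ (1 + ‖z‖) ^ 3 * decayWeight x := by
  unfold decayWeight
  rw [← div_eq_mul_inv, inv_eq_one_div, div_le_div_iff₀ (by positivity) (by positivity), one_mul,
    ← mul_pow]
  refine pow_le_pow_left₀ (by positivity) ?_ 3
  have h : ‖x‖ ≤ ‖z‖ + ‖z + x‖ := by
    simpa [add_comm] using norm_sub_le (z + x) z
  nlinarith [norm_nonneg z, norm_nonneg (z + x)]

theorem tendsto_decayWeight_atTop : Tendsto (fun r : ℝ => decayWeight r) atTop (𝓝 0) := by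
  unfold decayWeight
  refine tendsto_inv_atTop_zero.comp ((tendsto_pow_atTop (by norm_num)).comp ?_)
  exact tendsto_atTop_add_const_left _ _ tendsto_norm_atTop_atTop

theorem integrable_decayWeight [NormedSpace ℝ E] [FiniteDimensional ℝ E] [MeasurableSpace E]
    [BorelSpace E] (μ : Measure E) [μ.IsAddHaarMeasure] (hE : Module.finrank ℝ E < 3) :
    Integrable (fun x : E => decayWeight x) μ := by
  have h : (Module.finrank ℝ E : ℝ) < 3 := by exact_mod_cast hE
  refine (integrable_one_add_norm (μ := μ) h).congr (ae_of_all _ fun x => ?_)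
  simp only [decayWeight]
  rw [Real.rpow_neg (by positivity)]
  norm_cast

end DecayWeight

section CauchyPompeiu

variable {H : ℂ → ℂ} {M : ℝ}

theorem integrable_fderiv_polar (hd : ∀ w, ‖fderiv ℝ H w‖ ≤ M * decayWeight w) {v : ℝ → ℂ}
    (hv : Continuous v) (hv1 : ∀ θ, ‖v θ‖ ≤ 1) :
    Integrable (fun p : ℝ × ℝ => fderiv ℝ H (p.1 * exp (p.2 * I)) (v p.2))
      ((volume.restrict (Set.Ioi 0)).prod (volume.restrict (Set.Ioo (-Real.pi) Real.pi))) := by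
  have hw : Integrable (fun r : ℝ => decayWeight r) := integrable_decayWeight _ (by simp)
  have hb := (hw.restrict (s := Set.Ioi 0)).mul_prod
    (integrable_const (μ := volume.restrict (Set.Ioo (-Real.pi) Real.pi)) M)
  refine hb.mono' ?_ (ae_of_all _ fun p => ?_)
  · have h1 : Measurable fun p : ℝ × ℝ => fderiv ℝ H (p.1 * exp (p.2 * I)) :=
      (measurable_fderiv ℝ H).comp (by fun_prop)
    have h2 : Measurable fun p : ℝ × ℝ => v p.2 := hv.measurable.comp measurable_snd
    exact (isBoundedBilinearMap_apply.continuous.measurable.comp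
      (h1.prodMk h2)).aestronglyMeasurable
  · refine (ContinuousLinearMap.le_opNorm _ _).trans ?_
    refine (mul_le_of_le_one_right (norm_nonneg _) (hv1 _)).trans ((hd _).trans ?_)
    simp [decayWeight, mul_comm]

theorem integral_fderiv_radial (hH : Differentiable ℝ H)
    (hb : ∀ w, ‖H w‖ ≤ M * decayWeight w) (θ : ℝ)
    (hi : IntegrableOn (fun r : ℝ => fderiv ℝ H (r * exp (θ * I)) (exp (θ * I))) (Set.Ioi 0)) :
    ∫ r : ℝ in Set.Ioi 0, fderiv ℝ H (r * exp (θ * I)) (exp (θ * I)) = - H 0 := by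
  have hder : ∀ r : ℝ, HasDerivAt (fun r : ℝ => H (r * exp (θ * I)))
      (fderiv ℝ H (r * exp (θ * I)) (exp (θ * I))) r := fun r => by
    have h1 : HasDerivAt (fun r : ℝ => (r : ℂ) * exp (θ * I)) (exp (θ * I)) r := by
      simpa using (Complex.ofRealCLM.hasDerivAt (x := r)).mul_const (exp (θ * I))
    exact (hH _).hasFDerivAt.comp_hasDerivAt r h1
  have hlim : Tendsto (fun r : ℝ => H (r * exp (θ * I))) atTop (𝓝 0) := by
    refine squeeze_zero_norm (a := fun r : ℝ => M * decayWeight r) (fun r => ?_) ?_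
    · simpa [decayWeight, norm_exp_ofReal_mul_I] using hb (r * exp (θ * I))
    · simpa using tendsto_decayWeight_atTop.const_mul M
  rw [integral_Ioi_of_hasDerivAt_of_tendsto' (fun r _ => hder r) hi hlim]
  simp

theorem integral_fderiv_angular (hH : Differentiable ℝ H)
    (hd : ∀ w, ‖fderiv ℝ H w‖ ≤ M * decayWeight w) {r : ℝ} (hr : 0 < r) :
    ∫ θ : ℝ in Set.Ioo (-Real.pi) Real.pi, fderiv ℝ H (r * exp (θ * I)) (I * exp (θ * I)) = 0 := by
  have hder : ∀ θ : ℝ, HasDerivAt (fun θ : ℝ => H (r * exp (θ * I)))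
      (r * fderiv ℝ H (r * exp (θ * I)) (I * exp (θ * I))) θ := fun θ => by
    have h1 : HasDerivAt (fun θ : ℝ => (r : ℂ) * exp (θ * I)) (r • (I * exp (θ * I))) θ := by
      have h2 : HasDerivAt (fun θ : ℝ => (θ : ℂ) * I) I θ := by
        simpa using (Complex.ofRealCLM.hasDerivAt (x := θ)).mul_const I
      have := (h2.cexp).const_mul (r : ℂ)
      simpa [mul_comm, mul_left_comm] using this
    have := (hH _).hasFDerivAt.comp_hasDerivAt θ h1
    rw [map_smul, real_smul] at this
    exact this
  have hmeas : Measurable fun θ : ℝ =>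
      (r : ℂ) * fderiv ℝ H (r * exp (θ * I)) (I * exp (θ * I)) := by
    have h1 : Measurable fun θ : ℝ => fderiv ℝ H (r * exp (θ * I)) :=
      (measurable_fderiv ℝ H).comp (by fun_prop)
    have h2 : Measurable fun θ : ℝ => I * exp (θ * I) := by fun_prop
    exact (isBoundedBilinearMap_apply.continuous.measurable.comp (h1.prodMk h2)).const_mul _
  have hint : IntervalIntegrable (fun θ : ℝ =>
      (r : ℂ) * fderiv ℝ H (r * exp (θ * I)) (I * exp (θ * I))) volume (-Real.pi) Real.pi := by
    refine (intervalIntegrable_const (c := r * (M * decayWeight r))).mono_fun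
      hmeas.aestronglyMeasurable (ae_of_all _ fun θ => ?_)
    refine le_trans ?_ (le_abs_self _)
    beta_reduce
    rw [norm_mul, norm_real, Real.norm_of_nonneg hr.le]
    refine mul_le_mul_of_nonneg_left ?_ hr.le
    refine (ContinuousLinearMap.le_opNorm _ _).trans ?_
    have := hd (r * exp (θ * I))
    simpa [decayWeight, norm_exp_ofReal_mul_I] using this
  have h := intervalIntegral.integral_eq_sub_of_hasDerivAt (fun θ _ => hder θ) hint
  rw [intervalIntegral.integral_const_mul, intervalIntegral.integral_of_le
    (by linarith [Real.pi_pos]), integral_Ioc_eq_integral_Ioo] at h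
  have hper : exp (((-Real.pi : ℝ) : ℂ) * I) = exp ((Real.pi : ℂ) * I) := by
    rw [exp_pi_mul_I, ofReal_neg, neg_mul, exp_neg, exp_pi_mul_I]; norm_num
  rw [hper, sub_self] at h
  exact (mul_eq_zero.mp h).resolve_left (by exact_mod_cast hr.ne')

theorem dbar_div_polar (r θ : ℝ) (hr : 0 < r) :
    r • (dbar H (r * exp (θ * I)) / (r * exp (θ * I))) =
      (fderiv ℝ H (r * exp (θ * I)) (exp (θ * I)) +
        I * fderiv ℝ H (r * exp (θ * I)) (I * exp (θ * I))) / 2 := by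
  have hlin : ∀ (L : ℂ →L[ℝ] ℂ) (a b : ℝ), L (a + b * I) = a * L 1 + b * L I := fun L a b => by
    have : (a + b * I : ℂ) = a • (1 : ℂ) + b • I := by simp
    rw [this, map_add, map_smul, map_smul, real_smul, real_smul]
  have he : exp (θ * I) = (Real.cos θ : ℝ) + (Real.sin θ : ℝ) * I := by
    rw [exp_mul_I]; simp
  have hIe : I * exp (θ * I) = ((-Real.sin θ : ℝ) : ℂ) + (Real.cos θ : ℝ) * I := by
    rw [he]; push_cast; linear_combination (Complex.sin θ) * I_sq
  have hinv : (exp (θ * I))⁻¹ = (Real.cos θ : ℝ) - (Real.sin θ : ℝ) * I := by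
    rw [← exp_neg, ← neg_mul, exp_mul_I]; simp [sub_eq_add_neg]
  have hr' : (r : ℂ) ≠ 0 := by exact_mod_cast hr.ne'
  generalize hL : fderiv ℝ H (r * exp (θ * I)) = L
  have h1 : r • (dbar H (r * exp (θ * I)) / (r * exp (θ * I))) =
      dbar H (r * exp (θ * I)) * (exp (θ * I))⁻¹ := by
    rw [real_smul]; field_simp
  rw [h1, dbar, hL, hinv, hIe, he, hlin, hlin]
  push_cast
  linear_combination (-Complex.sin θ * L I / 2) * I_sq

theorem integral_dbar_div (hH : Differentiable ℝ H)
    (hb : ∀ w, ‖H w‖ ≤ M * decayWeight w) (hd : ∀ w, ‖fderiv ℝ H w‖ ≤ M * decayWeight w) :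
    ∫ x : ℂ, dbar H x / x = -(Real.pi * H 0) := by
  have hA := integrable_fderiv_polar hd (v := fun θ => exp (θ * I)) (by fun_prop)
    (fun θ => (norm_exp_ofReal_mul_I θ).le)
  have hB := integrable_fderiv_polar hd (v := fun θ => I * exp (θ * I)) (by fun_prop)
    (fun θ => by simp [norm_exp_ofReal_mul_I])
  have hpolar : ∫ x : ℂ, dbar H x / x =
      ∫ p : ℝ × ℝ, (fderiv ℝ H (p.1 * exp (p.2 * I)) (exp (p.2 * I)) +
        I * fderiv ℝ H (p.1 * exp (p.2 * I)) (I * exp (p.2 * I))) / 2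
      ∂((volume.restrict (Set.Ioi 0)).prod (volume.restrict (Set.Ioo (-Real.pi) Real.pi))) := by
    rw [← Complex.integral_comp_polarCoord_symm, polarCoord_target, Measure.volume_eq_prod,
      Measure.prod_restrict]
    refine setIntegral_congr_fun (measurableSet_Ioi.prod measurableSet_Ioo) fun p hp => ?_
    have := dbar_div_polar (H := H) p.1 p.2 hp.1
    rw [← this, exp_mul_I]
    simp
  rw [hpolar, integral_div, integral_add hA (hB.const_mul I), integral_const_mul,
    integral_prod_symm _ hA, integral_prod _ hB]
  have h1 : ∫ θ : ℝ in Set.Ioo (-Real.pi) Real.pi,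
      ∫ r : ℝ in Set.Ioi 0, fderiv ℝ H (r * exp (θ * I)) (exp (θ * I)) =
      ∫ _ : ℝ in Set.Ioo (-Real.pi) Real.pi, - H 0 := by
    refine integral_congr_ae ?_
    filter_upwards [hA.swap.prod_right_ae] with θ hθ
    exact integral_fderiv_radial hH hb θ hθ
  have h2 : ∫ r : ℝ in Set.Ioi 0, ∫ θ : ℝ in Set.Ioo (-Real.pi) Real.pi,
      fderiv ℝ H (r * exp (θ * I)) (I * exp (θ * I)) = 0 := by
    rw [setIntegral_congr_fun measurableSet_Ioi
      (fun r hr => integral_fderiv_angular hH hd (Set.mem_Ioi.mp hr))]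
    simp
  rw [h1, h2, setIntegral_const, Real.volume_real_Ioo_of_le (by linarith [Real.pi_pos])]
  rw [real_smul]; push_cast; ring

/-- The Cauchy–Pompeiu formula on the whole plane. -/
theorem dbarInv_dbar_s16 (hH : Differentiable ℝ H)
    (hb : ∀ w, ‖H w‖ ≤ M * decayWeight w) (hd : ∀ w, ‖fderiv ℝ H w‖ ≤ M * decayWeight w) (z : ℂ) :
    dbarInv (dbar H) z = H z := by
  have hM : 0 ≤ M := by
    simpa [decayWeight] using (norm_nonneg _).trans (hb 0)
  have hfd : ∀ x, fderiv ℝ (fun x => H (z + x)) x = fderiv ℝ H (z + x) := fun x =>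
    fderiv_comp_add_left z
  have htr : ∀ x, M * decayWeight (z + x) ≤ M * (1 + ‖z‖) ^ 3 * decayWeight x := fun x => by
    rw [mul_assoc]; exact mul_le_mul_of_nonneg_left (decayWeight_add_le z x) hM
  have h := integral_dbar_div (H := fun x => H (z + x)) (M := M * (1 + ‖z‖) ^ 3)
    (hH.comp (differentiable_id.const_add z)) (fun x => (hb _).trans (htr x))
    (fun x => by rw [hfd]; exact (hd _).trans (htr x))
  have hπ : (Real.pi : ℂ) ≠ 0 := by exact_mod_cast Real.pi_ne_zero
  rw [dbarInv, ← integral_add_left_eq_self _ z]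
  have h' : ∀ x, dbar H (z + x) / (z - (z + x)) = -(dbar (fun x => H (z + x)) x / x) := fun x => by
    rw [dbar, dbar, hfd, sub_add_cancel_left, div_neg]
  simp_rw [h']
  rw [integral_neg, h, add_zero]
  field_simp

end CauchyPompeiu

section CauchyTransformBounds

/-- An integrable function on the plane with the singularity `‖x‖⁻¹` at the origin. -/
noncomputable def singularWeight (x : ℂ) : ℝ := (‖x‖ * (‖x‖ ^ 2 + 1))⁻¹

theorem singularWeight_nonneg (x : ℂ) : 0 ≤ singularWeight x := by
  unfold singularWeight; positivity

theorem integrable_singularWeight : Integrable singularWeight := by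
  have h := integrable_fun_norm_addHaar (volume : Measure ℂ)
    (f := fun y : ℝ => (y * (y ^ 2 + 1))⁻¹)
  refine h.mpr ?_
  refine (integrable_inv_one_add_sq.integrableOn (s := Set.Ioi 0)).congr_fun (fun y hy => ?_)
    measurableSet_Ioi
  have hy' : y ≠ 0 := (Set.mem_Ioi.mp hy).ne'
  have hy2 : y ^ 2 + 1 ≠ 0 := by positivity
  have hy3 : 1 + y ^ 2 ≠ 0 := by positivity
  simp only [finrank_real_complex, smul_eq_mul]
  norm_num
  field_simp
  ring

theorem inv_norm_le_singularWeight (x : ℂ) : ‖x‖⁻¹ ≤ 2 * singularWeight x + 1 := by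
  rcases eq_or_ne x 0 with rfl | hx
  · simp [singularWeight]
  have hx' : 0 < ‖x‖ := norm_pos_iff.mpr hx
  have h : 2 * singularWeight x + 1 - ‖x‖⁻¹ =
      (2 + ‖x‖ * (‖x‖ ^ 2 + 1) - (‖x‖ ^ 2 + 1)) / (‖x‖ * (‖x‖ ^ 2 + 1)) := by
    unfold singularWeight; field_simp
  have h2 : 0 ≤ 2 + ‖x‖ * (‖x‖ ^ 2 + 1) - (‖x‖ ^ 2 + 1) := by
    nlinarith [sq_nonneg (‖x‖ - 1), mul_nonneg hx'.le (sq_nonneg (‖x‖ - 1))]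
  have : 0 ≤ 2 * singularWeight x + 1 - ‖x‖⁻¹ := by rw [h]; positivity
  linarith

/-- The norm bound of the Cauchy transform on functions dominated by `decayWeight`. -/
noncomputable def cauchyConst : ℝ :=
  Real.pi⁻¹ * (2 * (∫ x : ℂ, singularWeight x) + ∫ x : ℂ, decayWeight x)

theorem cauchyConst_nonneg : 0 ≤ cauchyConst := by
  have h1 : 0 ≤ ∫ x : ℂ, singularWeight x := integral_nonneg singularWeight_nonneg
  have h2 : 0 ≤ ∫ x : ℂ, decayWeight x := integral_nonneg decayWeight_nonneg
  have := Real.pi_pos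
  unfold cauchyConst; positivity

theorem integrable_decayWeight_complex : Integrable (fun x : ℂ => decayWeight x) :=
  integrable_decayWeight _ (by simp)

theorem integrable_singularWeight_add_decayWeight (z : ℂ) :
    Integrable (fun w : ℂ => 2 * singularWeight (z - w) + decayWeight w) :=
  ((integrable_singularWeight.comp_sub_left z).const_mul 2).add integrable_decayWeight_complex

variable {h : ℂ → ℂ} {M : ℝ}

theorem nonneg_of_norm_le_decayWeight (hb : ∀ w, ‖h w‖ ≤ M * decayWeight w) : 0 ≤ M := by
  simpa [decayWeight] using (norm_nonneg _).trans (hb 0)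

theorem norm_div_sub_le (hb : ∀ w, ‖h w‖ ≤ M * decayWeight w) (z w : ℂ) :
    ‖h w / (z - w)‖ ≤ M * (2 * singularWeight (z - w) + decayWeight w) := by
  have hM := nonneg_of_norm_le_decayWeight hb
  have h0 := decayWeight_nonneg w
  have h1 := decayWeight_le_one w
  have hs := singularWeight_nonneg (z - w)
  rw [div_eq_mul_inv, norm_mul, norm_inv]
  calc ‖h w‖ * ‖z - w‖⁻¹
      ≤ (M * decayWeight w) * (2 * singularWeight (z - w) + 1) :=
        mul_le_mul (hb w) (inv_norm_le_singularWeight _) (by positivity) (by positivity)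
    _ = M * (decayWeight w * (2 * singularWeight (z - w)) + decayWeight w) := by ring
    _ ≤ _ := by
        refine mul_le_mul_of_nonneg_left ?_ hM
        exact add_le_add (mul_le_of_le_one_left (by positivity) h1) le_rfl

theorem integrable_div_sub (hm : Measurable h) (hb : ∀ w, ‖h w‖ ≤ M * decayWeight w) (z : ℂ) :
    Integrable (fun w => h w / (z - w)) :=
  ((integrable_singularWeight_add_decayWeight z).const_mul M).mono'
    (hm.div (measurable_const.sub measurable_id)).aestronglyMeasurable
    (ae_of_all _ (norm_div_sub_le hb z))

theorem norm_dbarInv_le (hb : ∀ w, ‖h w‖ ≤ M * decayWeight w) (z : ℂ) :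
    ‖dbarInv h z‖ ≤ M * cauchyConst := by
  have h1 := norm_integral_le_of_norm_le
    ((integrable_singularWeight_add_decayWeight z).const_mul M)
    (ae_of_all _ (norm_div_sub_le hb z))
  rw [integral_const_mul, integral_add ((integrable_singularWeight.comp_sub_left z).const_mul 2)
    integrable_decayWeight_complex, integral_const_mul,
    integral_sub_left_eq_self singularWeight volume z] at h1
  rw [dbarInv, norm_mul, norm_inv, norm_real, Real.norm_of_nonneg Real.pi_pos.le, cauchyConst,
    mul_left_comm]
  exact mul_le_mul_of_nonneg_left h1 (inv_nonneg.mpr Real.pi_pos.le)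

theorem measurable_dbarInv (hm : Measurable h) : Measurable (dbarInv h) := by
  have h1 : Measurable (fun p : ℂ × ℂ => h p.2 / (p.1 - p.2)) := by fun_prop
  have h2 : StronglyMeasurable fun z : ℂ => ∫ w : ℂ, h w / (z - w) :=
    h1.stronglyMeasurable.integral_prod_right
  exact h2.measurable.const_mul _

theorem dbarInv_add_s16 {g : ℂ → ℂ} {N : ℝ} (hm : Measurable h) (hb : ∀ w, ‖h w‖ ≤ M * decayWeight w)
    (gm : Measurable g) (gb : ∀ w, ‖g w‖ ≤ N * decayWeight w) (z : ℂ) :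
    dbarInv (fun w => h w + g w) z = dbarInv h z + dbarInv g z := by
  simp only [dbarInv, add_div]
  rw [integral_add (integrable_div_sub hm hb z) (integrable_div_sub gm gb z), mul_add]

end CauchyTransformBounds

section Oscillation

/-- The real-linear exponent of `ek k`. -/
noncomputable def ekExponent (k : ℂ) : ℂ →L[ℝ] ℂ :=
  (I / 2) • (conj k • ContinuousLinearMap.id ℝ ℂ + k • (conjCLE : ℂ →L[ℝ] ℂ))

theorem ekExponent_apply (k v : ℂ) : ekExponent k v = I * (conj k * v + k * conj v) / 2 := by
  simp [ekExponent]; ring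

theorem norm_ekExponent_le (k : ℂ) : ‖ekExponent k‖ ≤ ‖k‖ := by
  refine ContinuousLinearMap.opNorm_le_bound _ (norm_nonneg k) fun v => ?_
  rw [ekExponent_apply, norm_div, norm_mul, norm_I, one_mul, RCLike.norm_ofNat]
  have := norm_add_le (conj k * v) (k * conj v)
  simp only [norm_mul, RCLike.norm_conj] at this
  linarith

theorem hasFDerivAt_ek_s16 (k z : ℂ) : HasFDerivAt (ek k) (ek k z • ekExponent k) z := by
  have h : ek k = fun z => exp (ekExponent k z) := by
    funext z; rw [ek, ekExponent_apply]
  rw [h]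
  exact (ekExponent k).hasFDerivAt.cexp

theorem continuous_ek (k : ℂ) : Continuous (ek k) := by
  unfold ek; fun_prop

theorem norm_dbar_le (G : ℂ → ℂ) (z : ℂ) : ‖dbar G z‖ ≤ ‖fderiv ℝ G z‖ := by
  have h1 := (fderiv ℝ G z).le_opNorm 1
  have h2 := (fderiv ℝ G z).le_opNorm I
  have h3 := norm_add_le (fderiv ℝ G z 1) (I * fderiv ℝ G z I)
  simp only [norm_mul, norm_I, norm_one, one_mul, mul_one] at h1 h2 h3
  rw [dbar, norm_div, RCLike.norm_ofNat]
  linarith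

variable {h : ℂ → ℂ} {M : ℝ}

/-- One integration by parts gains a factor `‖k‖⁻¹` in the Cauchy transform of `e_{-k} h`. -/
theorem norm_dbarInv_ek_mul_le (hh : Differentiable ℝ h) (hb : ∀ w, ‖h w‖ ≤ M * decayWeight w)
    (hd : ∀ w, ‖fderiv ℝ h w‖ ≤ M * decayWeight w) (k z : ℂ) :
    ‖dbarInv (fun w => ek (-k) w * h w) z‖ * ‖k‖ ≤ 2 * M * (cauchyConst + 1) := by
  have hM := nonneg_of_norm_le_decayWeight hb
  have hder : ∀ w, HasFDerivAt (fun w => ek (-k) w * h w)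
      (ek (-k) w • fderiv ℝ h w + h w • ek (-k) w • ekExponent (-k)) w := fun w =>
    (hasFDerivAt_ek_s16 (-k) w).mul (hh w).hasFDerivAt
  have hb' : ∀ w, ‖ek (-k) w * h w‖ ≤ M * decayWeight w := fun w => by
    rw [norm_mul, norm_ek, one_mul]; exact hb w
  have hdb : ∀ w, dbar (fun w => ek (-k) w * h w) w =
      ek (-k) w * dbar h w + -(I * k / 2) * (ek (-k) w * h w) := fun w => by
    rw [dbar, dbar, (hder w).fderiv]
    simp only [add_apply, smul_apply, ekExponent_apply,
      smul_eq_mul, map_neg, map_one, conj_I]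
    linear_combination (ek (-k) w * h w * I * (k - conj k) / 4) * I_sq
  have hmd : Measurable (dbar h) := by
    unfold dbar
    have h1 := measurable_fderiv_apply_const ℝ h 1
    have h2 := measurable_fderiv_apply_const ℝ h I
    fun_prop
  have hm : Measurable fun w => ek (-k) w * h w :=
    (continuous_ek _).measurable.mul hh.continuous.measurable
  have hm' : Measurable fun w => ek (-k) w * dbar h w := (continuous_ek _).measurable.mul hmd
  have hb1 : ∀ w, ‖ek (-k) w * dbar h w‖ ≤ M * decayWeight w := fun w => by
    rw [norm_mul, norm_ek, one_mul]; exact (norm_dbar_le h w).trans (hd w)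
  have hb2 : ∀ w, ‖-(I * k / 2) * (ek (-k) w * h w)‖ ≤ (‖k‖ / 2 * M) * decayWeight w := fun w => by
    rw [norm_mul, norm_neg, norm_div, norm_mul, norm_I, one_mul, RCLike.norm_ofNat, mul_assoc]
    exact mul_le_mul_of_nonneg_left (hb' w) (by positivity)
  have hpomp := dbarInv_dbar_s16 (H := fun w => ek (-k) w * h w) (M := M * (1 + ‖k‖))
    (fun w => (hder w).differentiableAt)
    (fun w => (hb' w).trans (by
      have := decayWeight_nonneg w
      have := mul_nonneg (mul_nonneg hM this) (norm_nonneg k)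
      nlinarith))
    (fun w => by
      rw [(hder w).fderiv]
      refine (norm_add_le _ _).trans ?_
      rw [norm_smul, norm_smul, norm_smul, norm_ek, one_mul, one_mul]
      have h1 := norm_ekExponent_le (-k)
      rw [norm_neg] at h1
      have h2 := mul_le_mul (hb w) h1 (norm_nonneg _) ((norm_nonneg _).trans (hb w))
      linarith [hd w]) z
  rw [funext hdb, dbarInv_add_s16 hm' hb1 (hm.const_mul _) hb2] at hpomp
  have hsc : dbarInv (fun w => -(I * k / 2) * (ek (-k) w * h w)) z =
      -(I * k / 2) * dbarInv (fun w => ek (-k) w * h w) z := by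
    simp only [dbarInv, mul_div_assoc]
    rw [integral_const_mul]; ring
  rw [hsc] at hpomp
  have heq : (I * k / 2) * dbarInv (fun w => ek (-k) w * h w) z =
      dbarInv (fun w => ek (-k) w * dbar h w) z - ek (-k) z * h z := by
    linear_combination -hpomp
  have hn := congrArg norm heq
  rw [norm_mul, norm_div, norm_mul, norm_I, one_mul, RCLike.norm_ofNat] at hn
  have h3 := norm_sub_le (dbarInv (fun w => ek (-k) w * dbar h w) z) (ek (-k) z * h z)
  have h4 := norm_dbarInv_le hb1 z
  have h5 := (hb' z).trans (mul_le_of_le_one_right hM (decayWeight_le_one z))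
  linarith

end Oscillation

section Smoothing

variable {ε : ℝ}

/-- A smooth approximation of the Cauchy kernel `x⁻¹` at scale `ε`. -/
noncomputable def smoothKernel (ε : ℝ) (x : ℂ) : ℂ := (‖x‖ ^ 2 + ε ^ 2)⁻¹ • conj x

theorem norm_inv_sub_smoothKernel_le (hε : 0 < ε) (x : ℂ) :
    ‖x⁻¹ - smoothKernel ε x‖ ≤ ε⁻¹ * singularWeight (ε⁻¹ • x) := by
  rcases eq_or_ne x 0 with rfl | hx
  · simp [smoothKernel, singularWeight]
  have hx' : 0 < ‖x‖ := norm_pos_iff.mpr hx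
  have h1 : x⁻¹ - smoothKernel ε x =
      ((‖x‖ ^ 2)⁻¹ - (‖x‖ ^ 2 + ε ^ 2)⁻¹) • conj x := by
    rw [smoothKernel, sub_smul, Complex.inv_def, normSq_eq_norm_sq, real_smul, real_smul,
      mul_comm (conj x)]
  have h2 : 0 ≤ (‖x‖ ^ 2)⁻¹ - (‖x‖ ^ 2 + ε ^ 2)⁻¹ :=
    sub_nonneg.mpr (inv_anti₀ (by positivity) (by nlinarith [sq_nonneg ε]))
  have h3 : ‖x‖ ^ 2 + ε ^ 2 ≠ 0 := by positivity
  rw [h1, norm_smul, RCLike.norm_conj, Real.norm_of_nonneg h2, singularWeight, norm_smul, norm_inv,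
    Real.norm_of_nonneg hε.le]
  apply le_of_eq
  have h4 : (ε⁻¹ * ‖x‖) ^ 2 + 1 = (‖x‖ ^ 2 + ε ^ 2) / ε ^ 2 := by field_simp
  rw [h4]
  field_simp
  ring

theorem hasFDerivAt_smoothKernel (hε : 0 < ε) (x : ℂ) :
    HasFDerivAt (smoothKernel ε)
      ((‖x‖ ^ 2 + ε ^ 2)⁻¹ • (conjCLE : ℂ →L[ℝ] ℂ) +
        ((-((‖x‖ ^ 2 + ε ^ 2) ^ 2)⁻¹) • (2 • innerSL ℝ x)).smulRight (conj x)) x := by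
  have h3 : ‖x‖ ^ 2 + ε ^ 2 ≠ 0 := by positivity
  have h1 : HasFDerivAt (fun x : ℂ => ‖x‖ ^ 2 + ε ^ 2) (2 • innerSL ℝ x) x :=
    (hasStrictFDerivAt_norm_sq x).hasFDerivAt.add_const _
  have h2 := (hasDerivAt_inv h3).comp_hasFDerivAt x h1
  exact h2.smul (conjCLE : ℂ →L[ℝ] ℂ).hasFDerivAt

theorem norm_fderiv_smoothKernel_le (hε : 0 < ε) (x : ℂ) :
    ‖fderiv ℝ (smoothKernel ε) x‖ ≤ 3 * (ε ^ 2)⁻¹ := by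
  have h3 : 0 < ‖x‖ ^ 2 + ε ^ 2 := by positivity
  have h4 : (‖x‖ ^ 2 + ε ^ 2)⁻¹ ≤ (ε ^ 2)⁻¹ :=
    inv_anti₀ (by positivity) (by nlinarith [sq_nonneg ‖x‖])
  rw [(hasFDerivAt_smoothKernel hε x).fderiv]
  refine (norm_add_le _ _).trans ?_
  have hc : ‖(conjCLE : ℂ →L[ℝ] ℂ)‖ ≤ 1 :=
    ContinuousLinearMap.opNorm_le_bound _ zero_le_one fun v => by simp
  have h5 : ‖(‖x‖ ^ 2 + ε ^ 2)⁻¹ • (conjCLE : ℂ →L[ℝ] ℂ)‖ ≤ (ε ^ 2)⁻¹ := by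
    rw [norm_smul, Real.norm_of_nonneg (by positivity)]
    exact (mul_le_of_le_one_right (by positivity) hc).trans h4
  have h6 : ‖((-((‖x‖ ^ 2 + ε ^ 2) ^ 2)⁻¹) • (2 • innerSL ℝ x)).smulRight (conj x)‖ ≤
      2 * (ε ^ 2)⁻¹ := by
    rw [ContinuousLinearMap.norm_smulRight_apply, norm_smul, RCLike.norm_conj, norm_neg,
      Real.norm_of_nonneg (by positivity), two_smul]
    have h7 : ‖innerSL ℝ x + innerSL ℝ x‖ ≤ 2 * ‖x‖ := by
      refine (norm_add_le _ _).trans ?_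
      rw [innerSL_apply_norm]; linarith
    calc ((‖x‖ ^ 2 + ε ^ 2) ^ 2)⁻¹ * ‖innerSL ℝ x + innerSL ℝ x‖ * ‖x‖
        ≤ ((‖x‖ ^ 2 + ε ^ 2) ^ 2)⁻¹ * (2 * ‖x‖) * ‖x‖ := by gcongr
      _ = 2 * (‖x‖ ^ 2 * (‖x‖ ^ 2 + ε ^ 2)⁻¹) * (‖x‖ ^ 2 + ε ^ 2)⁻¹ := by
          field_simp
      _ ≤ 2 * 1 * (ε ^ 2)⁻¹ := by
          gcongr
          rw [← div_eq_mul_inv, div_le_one h3]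
          nlinarith [sq_nonneg ε]
      _ = 2 * (ε ^ 2)⁻¹ := by ring
  linarith

theorem norm_smoothKernel_le (hε : 0 < ε) (x : ℂ) : ‖smoothKernel ε x‖ ≤ ε⁻¹ := by
  have h3 : 0 < ‖x‖ ^ 2 + ε ^ 2 := by positivity
  rw [smoothKernel, norm_smul, RCLike.norm_conj, Real.norm_of_nonneg (by positivity),
    inv_mul_eq_div, div_le_iff₀ h3, inv_mul_eq_div, le_div_iff₀ hε]
  nlinarith [sq_nonneg (‖x‖ - ε), norm_nonneg x]

theorem continuous_smoothKernel (hε : 0 < ε) : Continuous (smoothKernel ε) :=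
  continuous_iff_continuousAt.mpr fun x => (hasFDerivAt_smoothKernel hε x).continuousAt

/-- The Cauchy transform with the kernel smoothed at scale `ε`. -/
noncomputable def smoothCauchy (ε : ℝ) (f : ℂ → ℂ) (w : ℂ) : ℂ :=
  (Real.pi : ℂ)⁻¹ * ∫ v : ℂ, f v * smoothKernel ε (w - v)

variable {f : ℂ → ℂ} {M : ℝ}

theorem integrable_of_norm_le_decayWeight (hm : Measurable f)
    (hb : ∀ w, ‖f w‖ ≤ M * decayWeight w) : Integrable f :=
  (integrable_decayWeight_complex.const_mul M).mono' hm.aestronglyMeasurable (ae_of_all _ hb)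

theorem integrable_mul_smoothKernel (hε : 0 < ε) (hm : Measurable f)
    (hb : ∀ w, ‖f w‖ ≤ M * decayWeight w) (w : ℂ) :
    Integrable (fun v => f v * smoothKernel ε (w - v)) := by
  have hc := continuous_smoothKernel hε
  exact (integrable_of_norm_le_decayWeight hm hb).mul_bdd
    (Continuous.aestronglyMeasurable (by fun_prop)) (ae_of_all _ fun v => norm_smoothKernel_le hε _)

theorem norm_smoothCauchy_le (hε : 0 < ε)
    (hb : ∀ w, ‖f w‖ ≤ M * decayWeight w) (w : ℂ) :
    ‖smoothCauchy ε f w‖ ≤ M * (Real.pi⁻¹ * (∫ x : ℂ, decayWeight x) * ε⁻¹) := by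
  have h1 : ‖∫ v : ℂ, f v * smoothKernel ε (w - v)‖ ≤ ∫ v : ℂ, M * decayWeight v * ε⁻¹ :=
    norm_integral_le_of_norm_le ((integrable_decayWeight_complex.const_mul M).mul_const _)
      (ae_of_all _ fun v => by
        rw [norm_mul]
        exact mul_le_mul (hb v) (norm_smoothKernel_le hε _) (norm_nonneg _)
          ((norm_nonneg _).trans (hb v)))
  rw [integral_mul_const, integral_const_mul] at h1
  rw [smoothCauchy, norm_mul, norm_inv, norm_real, Real.norm_of_nonneg Real.pi_pos.le]
  have := mul_le_mul_of_nonneg_left h1 (inv_nonneg.mpr Real.pi_pos.le)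
  linarith

theorem hasFDerivAt_smoothCauchy (hε : 0 < ε) (hm : Measurable f)
    (hb : ∀ w, ‖f w‖ ≤ M * decayWeight w) (w : ℂ) :
    HasFDerivAt (smoothCauchy ε f)
      ((Real.pi : ℂ)⁻¹ • ∫ v : ℂ, f v • fderiv ℝ (smoothKernel ε) (w - v)) w := by
  have hc := continuous_smoothKernel hε
  refine HasFDerivAt.const_mul (hasFDerivAt_integral_of_dominated_of_fderiv_le
    (bound := fun v => M * decayWeight v * (3 * (ε ^ 2)⁻¹))
    (F' := fun w v => f v • fderiv ℝ (smoothKernel ε) (w - v)) univ_mem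
    (Eventually.of_forall fun w => (integrable_mul_smoothKernel hε hm hb w).aestronglyMeasurable)
    (integrable_mul_smoothKernel hε hm hb w) ?_ (ae_of_all _ fun v w _ => ?_)
    ((integrable_decayWeight_complex.const_mul M).mul_const _)
    (ae_of_all _ fun v w _ => ?_)) _
  · have h1 : Measurable fun v => fderiv ℝ (smoothKernel ε) (w - v) :=
      (measurable_fderiv ℝ (smoothKernel ε)).comp (measurable_const.sub measurable_id)
    exact hm.aestronglyMeasurable.smul h1.aestronglyMeasurable
  · rw [norm_smul]
    exact mul_le_mul (hb v) (norm_fderiv_smoothKernel_le hε _) (norm_nonneg _)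
      ((norm_nonneg _).trans (hb v))
  · have h1 : HasFDerivAt (fun w => smoothKernel ε (w - v))
        (fderiv ℝ (smoothKernel ε) (w - v)) w := by
      rw [(hasFDerivAt_smoothKernel hε (w - v)).fderiv]
      exact (hasFDerivAt_smoothKernel hε (w - v)).comp w ((hasFDerivAt_id w).sub_const v)
    exact h1.const_mul (f v)

theorem norm_fderiv_smoothCauchy_le (hε : 0 < ε) (hm : Measurable f)
    (hb : ∀ w, ‖f w‖ ≤ M * decayWeight w) (w : ℂ) :
    ‖fderiv ℝ (smoothCauchy ε f) w‖ ≤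
      M * (Real.pi⁻¹ * (∫ x : ℂ, decayWeight x) * (3 * (ε ^ 2)⁻¹)) := by
  rw [(hasFDerivAt_smoothCauchy hε hm hb w).fderiv]
  have h1 : ‖∫ v : ℂ, f v • fderiv ℝ (smoothKernel ε) (w - v)‖ ≤
      ∫ v : ℂ, M * decayWeight v * (3 * (ε ^ 2)⁻¹) :=
    norm_integral_le_of_norm_le ((integrable_decayWeight_complex.const_mul M).mul_const _)
      (ae_of_all _ fun v => by
        rw [norm_smul]
        exact mul_le_mul (hb v) (norm_fderiv_smoothKernel_le hε _) (norm_nonneg _)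
          ((norm_nonneg _).trans (hb v)))
  rw [integral_mul_const, integral_const_mul] at h1
  rw [norm_smul, norm_inv, norm_real, Real.norm_of_nonneg Real.pi_pos.le]
  have := mul_le_mul_of_nonneg_left h1 (inv_nonneg.mpr Real.pi_pos.le)
  linarith

theorem norm_dbarInv_sub_smoothCauchy_le (hε : 0 < ε) (hm : Measurable f)
    (hb : ∀ w, ‖f w‖ ≤ M * decayWeight w) (w : ℂ) :
    ‖dbarInv f w - smoothCauchy ε f w‖ ≤ M * (ε * (Real.pi⁻¹ * ∫ x : ℂ, singularWeight x)) := by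
  have hM := nonneg_of_norm_le_decayWeight hb
  have hs : Integrable fun x : ℂ => ε⁻¹ * singularWeight (ε⁻¹ • x) :=
    (integrable_singularWeight.comp_smul (inv_ne_zero hε.ne')).const_mul _
  have h1 : ‖∫ v : ℂ, (f v / (w - v) - f v * smoothKernel ε (w - v))‖ ≤
      ∫ v : ℂ, M * (ε⁻¹ * singularWeight (ε⁻¹ • (w - v))) := by
    refine norm_integral_le_of_norm_le ((hs.comp_sub_left w).const_mul M)
      (ae_of_all _ fun v => ?_)
    rw [div_eq_mul_inv, ← mul_sub, norm_mul]
    exact mul_le_mul ((hb v).trans (mul_le_of_le_one_right hM (decayWeight_le_one v)))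
      (norm_inv_sub_smoothKernel_le hε _) (norm_nonneg _) hM
  rw [integral_const_mul,
    integral_sub_left_eq_self (fun x : ℂ => ε⁻¹ * singularWeight (ε⁻¹ • x)) volume w,
    integral_const_mul, Measure.integral_comp_inv_smul_of_nonneg _ _ hε.le,
    finrank_real_complex, smul_eq_mul,
    integral_sub (integrable_div_sub hm hb w) (integrable_mul_smoothKernel hε hm hb w)] at h1
  rw [dbarInv, smoothCauchy, ← mul_sub, norm_mul, norm_inv, norm_real,
    Real.norm_of_nonneg Real.pi_pos.le]
  refine (mul_le_mul_of_nonneg_left h1 (inv_nonneg.mpr Real.pi_pos.le)).trans (le_of_eq ?_)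
  field_simp

end Smoothing

section Scattering

/-- The antilinear operator `F ↦ ∂̄⁻¹[e_{-k} q conj F]`. -/
noncomputable def scatteringOp (q : ℂ → ℂ) (k : ℂ) (F : ℂ → ℂ) : ℂ → ℂ :=
  dbarInv fun w => ek (-k) w * q w * conj (F w)

variable {q F G : ℂ → ℂ} {A m n : ℝ}

theorem measurable_scatteringDensity (hq : Differentiable ℝ q) (hF : Measurable F) (k : ℂ) :
    Measurable fun w => ek (-k) w * q w * conj (F w) :=
  ((continuous_ek _).measurable.mul hq.continuous.measurable).mul
    (continuous_conj.measurable.comp hF)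

theorem norm_scatteringDensity_le (hb : ∀ w, ‖q w‖ ≤ A * decayWeight w) (hF : ∀ w, ‖F w‖ ≤ m)
    (k w : ℂ) : ‖ek (-k) w * q w * conj (F w)‖ ≤ A * m * decayWeight w := by
  rw [norm_mul, norm_mul, norm_ek, one_mul, RCLike.norm_conj]
  have := mul_le_mul (hb w) (hF w) (norm_nonneg _) ((norm_nonneg _).trans (hb w))
  linarith

theorem norm_scatteringOp_le (hb : ∀ w, ‖q w‖ ≤ A * decayWeight w) (hF : ∀ w, ‖F w‖ ≤ m)
    (k z : ℂ) : ‖scatteringOp q k F z‖ ≤ A * m * cauchyConst :=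
  norm_dbarInv_le (norm_scatteringDensity_le hb hF k) z

theorem measurable_scatteringOp (hq : Differentiable ℝ q) (hF : Measurable F) (k : ℂ) :
    Measurable (scatteringOp q k F) :=
  measurable_dbarInv (measurable_scatteringDensity hq hF k)

theorem scatteringOp_add (hq : Differentiable ℝ q) (hb : ∀ w, ‖q w‖ ≤ A * decayWeight w)
    (hF : Measurable F) (hFb : ∀ w, ‖F w‖ ≤ m) (hG : Measurable G) (hGb : ∀ w, ‖G w‖ ≤ n)
    (k z : ℂ) : scatteringOp q k (fun w => F w + G w) z =
      scatteringOp q k F z + scatteringOp q k G z := by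
  simp only [scatteringOp, map_add, mul_add]
  exact dbarInv_add_s16 (measurable_scatteringDensity hq hF k) (norm_scatteringDensity_le hb hFb k)
    (measurable_scatteringDensity hq hG k) (norm_scatteringDensity_le hb hGb k) z

theorem norm_scatteringOp_one_mul_le (hq : Differentiable ℝ q)
    (hb : ∀ w, ‖q w‖ ≤ A * decayWeight w) (hd : ∀ w, ‖fderiv ℝ q w‖ ≤ A * decayWeight w) (k z : ℂ) :
    ‖scatteringOp q k (fun _ => 1) z‖ * ‖k‖ ≤ 2 * A * (cauchyConst + 1) := by
  simpa [scatteringOp] using norm_dbarInv_ek_mul_le hq hb hd k z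

/-- On `C¹` functions the operator `scatteringOp` is small for large `k`. -/
theorem norm_scatteringOp_mul_le_of_differentiable (hq : Differentiable ℝ q)
    (hb : ∀ w, ‖q w‖ ≤ A * decayWeight w) (hd : ∀ w, ‖fderiv ℝ q w‖ ≤ A * decayWeight w)
    (hF : Differentiable ℝ F) (hFb : ∀ w, ‖F w‖ ≤ m) (hFd : ∀ w, ‖fderiv ℝ F w‖ ≤ n) (k z : ℂ) :
    ‖scatteringOp q k F z‖ * ‖k‖ ≤ 2 * (A * (m + n)) * (cauchyConst + 1) := by
  have hA := nonneg_of_norm_le_decayWeight hb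
  have hn : 0 ≤ n := (norm_nonneg _).trans (hFd 0)
  have hc : ∀ w, HasFDerivAt (fun w => conj (F w))
      ((conjCLE : ℂ →L[ℝ] ℂ).comp (fderiv ℝ F w)) w := fun w =>
    (conjCLE : ℂ →L[ℝ] ℂ).hasFDerivAt.comp w (hF w).hasFDerivAt
  have hder : ∀ w, HasFDerivAt (fun w => q w * conj (F w))
      (q w • (conjCLE : ℂ →L[ℝ] ℂ).comp (fderiv ℝ F w) + conj (F w) • fderiv ℝ q w) w := fun w =>
    (hq w).hasFDerivAt.mul (hc w)
  have h := norm_dbarInv_ek_mul_le (h := fun w => q w * conj (F w)) (M := A * (m + n))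
    (fun w => (hder w).differentiableAt) (fun w => ?_) (fun w => ?_) k z
  · simpa only [scatteringOp, mul_assoc] using h
  · rw [norm_mul, RCLike.norm_conj]
    have h1 := mul_le_mul (hb w) (hFb w) (norm_nonneg _) ((norm_nonneg _).trans (hb w))
    have h2 := mul_nonneg (mul_nonneg hA hn) (decayWeight_nonneg w)
    linarith
  · rw [(hder w).fderiv]
    refine (norm_add_le _ _).trans ?_
    rw [norm_smul, norm_smul, RCLike.norm_conj]
    have hcn : ‖(conjCLE : ℂ →L[ℝ] ℂ).comp (fderiv ℝ F w)‖ ≤ n := by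
      refine (ContinuousLinearMap.opNorm_le_bound _ (norm_nonneg _) fun v => ?_).trans (hFd w)
      simpa using (fderiv ℝ F w).le_opNorm v
    have h1 := mul_le_mul (hb w) hcn (norm_nonneg _) ((norm_nonneg _).trans (hb w))
    have h2 := mul_le_mul (hFb w) (hd w) (norm_nonneg _) ((norm_nonneg _).trans (hFb w))
    linarith

/-- The square of `scatteringOp` tends to zero in operator norm as `k → ∞`. -/
theorem exists_norm_scatteringOp_scatteringOp_le (hq : Differentiable ℝ q)
    (hb : ∀ w, ‖q w‖ ≤ A * decayWeight w) (hd : ∀ w, ‖fderiv ℝ q w‖ ≤ A * decayWeight w)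
    {δ : ℝ} (hδ : 0 < δ) :
    ∃ K : ℝ, ∀ k : ℂ, K ≤ ‖k‖ → ∀ (F : ℂ → ℂ) (m : ℝ), Measurable F → (∀ w, ‖F w‖ ≤ m) →
      ∀ z, ‖scatteringOp q k (scatteringOp q k F) z‖ ≤ δ * m := by
  have hA := nonneg_of_norm_le_decayWeight hb
  have hc := cauchyConst_nonneg
  set S : ℝ := Real.pi⁻¹ * ∫ x : ℂ, singularWeight x
  set D : ℝ := Real.pi⁻¹ * ∫ x : ℂ, decayWeight x with hD
  have hS0 : 0 ≤ S :=
    mul_nonneg (inv_nonneg.mpr Real.pi_pos.le) (integral_nonneg singularWeight_nonneg)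
  have hD0 : 0 ≤ D :=
    mul_nonneg (inv_nonneg.mpr Real.pi_pos.le) (integral_nonneg decayWeight_nonneg)
  obtain ⟨ε, hε, hεδ⟩ : ∃ ε : ℝ, 0 < ε ∧ A * (A * (ε * S)) * cauchyConst ≤ δ / 2 := by
    refine ⟨δ / 2 / (A * (A * S) * cauchyConst + 1), by positivity, ?_⟩
    have h1 : A * (A * (δ / 2 / (A * (A * S) * cauchyConst + 1) * S)) * cauchyConst =
        δ / 2 * ((A * (A * S) * cauchyConst) / (A * (A * S) * cauchyConst + 1)) := by ring
    rw [h1]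
    refine mul_le_of_le_one_right (by positivity) ?_
    rw [div_le_one (by positivity)]
    linarith
  set B : ℝ := 2 * (A * (A * (D * ε⁻¹) + A * (D * (3 * (ε ^ 2)⁻¹)))) * (cauchyConst + 1) with hB
  have hB0 : 0 ≤ B := by positivity
  refine ⟨2 * B / δ + 1, fun k hk F m hF hFb z => ?_⟩
  have hk0 : 0 < ‖k‖ := by
    have : 0 ≤ 2 * B / δ := by positivity
    linarith
  have hm : 0 ≤ m := (norm_nonneg _).trans (hFb 0)
  set f : ℂ → ℂ := fun w => ek (-k) w * q w * conj (F w)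
  have hfm : Measurable f := measurable_scatteringDensity hq hF k
  have hfb : ∀ w, ‖f w‖ ≤ A * m * decayWeight w := norm_scatteringDensity_le hb hFb k
  have hsd : Differentiable ℝ (smoothCauchy ε f) := fun w =>
    (hasFDerivAt_smoothCauchy hε hfm hfb w).differentiableAt
  have herr : ∀ w, ‖scatteringOp q k F w - smoothCauchy ε f w‖ ≤ A * m * (ε * S) :=
    norm_dbarInv_sub_smoothCauchy_le hε hfm hfb
  have hsplit : scatteringOp q k (scatteringOp q k F) z =
      scatteringOp q k (fun w => scatteringOp q k F w - smoothCauchy ε f w) z +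
        scatteringOp q k (smoothCauchy ε f) z := by
    rw [← scatteringOp_add (F := fun w => scatteringOp q k F w - smoothCauchy ε f w) hq hb
      ((measurable_scatteringOp hq hF k).sub hsd.continuous.measurable) herr
      hsd.continuous.measurable (norm_smoothCauchy_le hε hfb)]
    simp only [sub_add_cancel]
  have h1 := norm_scatteringOp_le hb herr k z
  have h2 := norm_scatteringOp_mul_le_of_differentiable hq hb hd hsd
    (norm_smoothCauchy_le hε hfb) (norm_fderiv_smoothCauchy_le hε hfm hfb) k z
  have h3 : ‖scatteringOp q k (smoothCauchy ε f) z‖ ≤ δ / 2 * m := by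
    refine le_of_mul_le_mul_right (h2.trans ?_) hk0
    have h4 : B ≤ δ / 2 * ‖k‖ := by
      have h5 : 2 * B / δ ≤ ‖k‖ := by linarith
      rw [div_le_iff₀ hδ] at h5
      linarith
    calc _ = B * m := by rw [hB, hD]; ring
      _ ≤ δ / 2 * ‖k‖ * m := mul_le_mul_of_nonneg_right h4 hm
      _ = _ := by ring
  have h6 : A * (A * m * (ε * S)) * cauchyConst ≤ δ / 2 * m := by
    have := mul_le_mul_of_nonneg_right hεδ hm
    linarith
  rw [hsplit]
  refine (norm_add_le _ _).trans ?_
  linarith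

theorem exists_norm_sub_one_le (hq : Differentiable ℝ q)
    (hb : ∀ w, ‖q w‖ ≤ A * decayWeight w) (hd : ∀ w, ‖fderiv ℝ q w‖ ≤ A * decayWeight w) :
    ∃ C K : ℝ, ∀ (k : ℂ) (v₁ v₂ : ℂ → ℂ), K ≤ ‖k‖ → IsScattering q k v₁ v₂ →
      ∀ z : ℂ, ‖v₁ z - 1‖ ≤ C / ‖k‖ ∧ ‖v₂ z‖ ≤ C / ‖k‖ := by
  obtain ⟨K, hK⟩ := exists_norm_scatteringOp_scatteringOp_le hq hb hd (δ := 1 / 2) (by norm_num)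
  have hA := nonneg_of_norm_le_decayWeight hb
  have hc := cauchyConst_nonneg
  set c : ℝ := 2 * A * (cauchyConst + 1)
  have hc0 : 0 ≤ c := by positivity
  set C₁ : ℝ := 2 * (A * c * cauchyConst) with hC₁
  have hC₁0 : 0 ≤ C₁ := by positivity
  refine ⟨C₁ + (c + A * C₁ * cauchyConst), max K 1, fun k v₁ v₂ hk hv => ?_⟩
  obtain ⟨hc1, hb1, -, -, he1, he2⟩ := hv
  have hk0 : 0 < ‖k‖ := lt_of_lt_of_le one_pos ((le_max_right _ _).trans hk)
  obtain ⟨R, hR⟩ := hb1.exists_norm_le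
  set G : ℂ → ℂ := fun z => v₁ z - 1 with hG
  have hGm : Measurable G := (hc1.sub continuous_const).measurable
  have hbdd : BddAbove (Set.range fun z => ‖G z‖) := by
    refine ⟨R + 1, ?_⟩
    rintro _ ⟨z, rfl⟩
    refine (norm_sub_le _ _).trans ?_
    rw [norm_one]
    linarith [hR (v₁ z) ⟨z, rfl⟩]
  set m : ℝ := ⨆ z, ‖G z‖
  have hGb : ∀ w, ‖G w‖ ≤ m := le_ciSup hbdd
  have hone : ∀ w, ‖scatteringOp q k (fun _ => 1) w‖ ≤ c / ‖k‖ := fun w =>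
    (le_div_iff₀ hk0).mpr (norm_scatteringOp_one_mul_le hq hb hd k w)
  have hv2 : v₂ = fun z => scatteringOp q k (fun _ => 1) z + scatteringOp q k G z := by
    funext z
    rw [← scatteringOp_add hq hb measurable_const (m := 1) (fun _ => by simp) hGm hGb, he2 z]
    simp [scatteringOp, hG]
  have hv1 : ∀ z, G z = scatteringOp q k (scatteringOp q k (fun _ => 1)) z +
      scatteringOp q k (scatteringOp q k G) z := fun z => by
    rw [← scatteringOp_add hq hb (measurable_scatteringOp hq measurable_const k) hone
      (measurable_scatteringOp hq hGm k) (norm_scatteringOp_le hb hGb k), ← hv2]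
    simp only [hG]
    rw [he1 z, add_sub_cancel_left, scatteringOp]
  have hGle : ∀ z, ‖G z‖ ≤ A * (c / ‖k‖) * cauchyConst + 1 / 2 * m := fun z => by
    rw [hv1 z]
    exact (norm_add_le _ _).trans (add_le_add (norm_scatteringOp_le hb hone k z)
      (hK k ((le_max_left _ _).trans hk) G m hGm hGb z))
  have hmle : m ≤ C₁ / ‖k‖ := by
    have h1 : m ≤ A * (c / ‖k‖) * cauchyConst + 1 / 2 * m := ciSup_le hGle
    have h2 : C₁ / ‖k‖ = 2 * (A * (c / ‖k‖) * cauchyConst) := by rw [hC₁]; ring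
    linarith
  have hG' : ∀ z, ‖G z‖ ≤ C₁ / ‖k‖ := fun z => (hGb z).trans hmle
  refine fun z => ⟨(hG' z).trans ?_, ?_⟩
  · gcongr
    have : 0 ≤ c + A * C₁ * cauchyConst := by positivity
    linarith
  · have h1 := norm_scatteringOp_le hb hG' k z
    have h2 : (C₁ + (c + A * C₁ * cauchyConst)) / ‖k‖ =
        C₁ / ‖k‖ + (c / ‖k‖ + A * (C₁ / ‖k‖) * cauchyConst) := by ring
    have h3 : 0 ≤ C₁ / ‖k‖ := by positivity
    rw [hv2, h2]
    exact (norm_add_le _ _).trans (by linarith [hone z])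

theorem SchwartzMap.exists_norm_le_decayWeight (q : 𝓢(ℂ, ℂ)) :
    ∃ A : ℝ, (∀ w, ‖q w‖ ≤ A * decayWeight w) ∧ ∀ w, ‖fderiv ℝ q w‖ ≤ A * decayWeight w := by
  set A : ℝ := 2 ^ 3 * ((Finset.Iic (3, 1)).sup fun m => SchwartzMap.seminorm ℝ m.1 m.2) q
  have h : ∀ n ≤ 1, ∀ w, ‖iteratedFDeriv ℝ n q w‖ ≤ A * decayWeight w := fun n hn w => by
    have := SchwartzMap.one_add_le_sup_seminorm_apply (𝕜 := ℝ) (m := (3, 1)) (k := 3) (n := n)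
      le_rfl hn q w
    rwa [decayWeight, ← div_eq_mul_inv, le_div_iff₀ (by positivity), mul_comm]
  refine ⟨A, fun w => ?_, fun w => ?_⟩
  · simpa only [norm_iteratedFDeriv_zero] using h 0 zero_le_one w
  · simpa only [norm_iteratedFDeriv_one] using h 1 le_rfl w

end Scattering

/-- Remark 3.3: large-`k` asymptotics of the scattering solutions. -/
theorem stmt16 (q : 𝓢(ℂ, ℂ)) (u₁ u₂ : ℂ → ℂ → ℂ)
    (hu : ∀ k : ℂ, IsScattering (⇑q) k (fun z => u₁ z k) (fun z => u₂ z k)) :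
    (∃ C K : ℝ, ∀ k : ℂ, K ≤ ‖k‖ → ∀ z : ℂ, ‖u₁ z k - 1‖ ≤ C / ‖k‖) ∧
      ∀ z : ℂ, Tendsto (fun k : ℂ => u₂ z k) (cocompact ℂ) (𝓝 0) := by
  obtain ⟨A, hb, hd⟩ := q.exists_norm_le_decayWeight
  obtain ⟨C, K, hCK⟩ := exists_norm_sub_one_le q.differentiable hb hd
  refine ⟨⟨C, K, fun k hk z => (hCK k _ _ hk (hu k) z).1⟩, fun z => ?_⟩
  refine squeeze_zero_norm' (a := fun k : ℂ => C / ‖k‖) ?_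
    (tendsto_const_nhds.div_atTop (tendsto_norm_cocompact_atTop))
  filter_upwards [(tendsto_norm_cocompact_atTop).eventually_ge_atTop K] with k hk
  exact (hCK k _ _ hk (hu k) z).2
end
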